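/- arXiv:1701.05487 — 2 statements merged into one kernel-verified Lean document; each statement's English description precedes it below -/
import Mathlib

section
/- For every relational vocabulary ρ and all m, q ∈ ℕ there exist q*, r* ∈ ℕ such that for every ρ-structure B, every first-order formula ψ(z₁,…,z_m) over ρ of quantifier rank at most q, and all tuples w̄, w̄' ∈ U(B)^m: if ltp_{q*,r*}(B, w̄) = ltp_{q*,r*}(B, w̄'), then B ⊨ ψ(w̄) if and only if B ⊨ ψ(w̄'). -/
open FirstOrder FirstOrder.Language

universe w

/-- The quantifier rank of a first-order (bounded) formula: the nesting depth of quantifiers. -/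
def qRank {L : FirstOrder.Language} : ∀ {α : Type*} {n : ℕ}, L.BoundedFormula α n → ℕ
  | _, _, .falsum => 0
  | _, _, .equal _ _ => 0
  | _, _, .rel _ _ => 0
  | _, _, .imp f g => max (qRank f) (qRank g)
  | _, _, .all f => qRank f + 1

/-- Adjacency in the Gaifman graph of a structure: two distinct elements are adjacent iff
they occur together in some tuple of some relation. -/
def gaifmanAdj (L : FirstOrder.Language) (M : Type w) [L.Structure M] (a b : M) : Prop :=
  a ≠ b ∧ ∃ (n : ℕ) (R : L.Relations n) (t : Fin n → M),
    Structure.RelMap R t ∧ (∃ i, t i = a) ∧ (∃ j, t j = b)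

/-- `distLE L M r a b` means the distance between `a` and `b` in the Gaifman graph of `M`
is at most `r`. -/
def distLE (L : FirstOrder.Language) (M : Type w) [L.Structure M] : ℕ → M → M → Prop
  | 0, a, b => a = b
  | r + 1, a, b => a = b ∨ ∃ c, gaifmanAdj L M a c ∧ distLE L M r c b

theorem distLE_self (L : FirstOrder.Language) (M : Type w) [L.Structure M] (r : ℕ) (a : M) :
    distLE L M r a a := by
  cases r with
  | zero => rfl
  | succ r => exact Or.inl rfl

/-- The `r`-neighbourhood of a tuple: all elements at Gaifman distance at most `r`
from some component of the tuple. -/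
def nbhd (L : FirstOrder.Language) (M : Type w) [L.Structure M] (r : ℕ) {k : ℕ}
    (u : Fin k → M) : Set M :=
  {b | ∃ i, distLE L M r (u i) b}

/-- `IsDistFormula L r d` says that the formula `d`, with two free variables, expresses
that the Gaifman distance between its two arguments is at most `r` (this is the property
of the formula `δ_{≤r}`). -/
def IsDistFormula.{v} (L : FirstOrder.Language) (r : ℕ) (d : L.Formula (Fin 2)) : Prop :=
  ∀ (M : Type v) [L.Structure M], ∀ a b : M, d.Realize ![a, b] ↔ distLE L M r a b

/-- The radius-`r` relativisation of a formula with free variables `x_0, …, x_{k-1}`,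
relative to a formula `d = δ_{≤r}` expressing distance at most `r`: every (universal)
quantifier `∀ y ψ` is replaced by `∀ y (⋁_i δ_{≤r}(x_i, y) → ψ)` (and consequently every
existential quantifier `∃ y ψ` by `∃ y (⋁_i δ_{≤r}(x_i, y) ∧ ψ)`). -/
def relativize {L : FirstOrder.Language} (d : L.Formula (Fin 2)) :
    ∀ {k n : ℕ}, L.BoundedFormula (Fin k) n → L.BoundedFormula (Fin k) n
  | _, _, .falsum => .falsum
  | _, _, .equal t₁ t₂ => .equal t₁ t₂
  | _, _, .rel R ts => .rel R ts
  | _, _, .imp f g => (relativize d f).imp (relativize d g)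
  | k, n, .all f =>
      ((((List.finRange k).map fun i =>
          BoundedFormula.relabel (![Sum.inl i, Sum.inr (Fin.last n)] : Fin 2 → (Fin k) ⊕ (Fin (n + 1))) d).foldr
            (· ⊔ ·) ⊥).imp (relativize d f)).all

/-- A formula is syntactically `r`-local (w.r.t. the distance formula `d = δ_{≤r}`) if it is
the radius-`r` relativisation of some formula. -/
def SynLocal {L : FirstOrder.Language} (d : L.Formula (Fin 2)) {k : ℕ}
    (φ : L.Formula (Fin k)) : Prop :=
  ∃ ψ : L.Formula (Fin k), φ = relativize d ψ

/-- The local `(q, r)`-type of a tuple `u` in `M`: the set of syntactically `r`-local formulas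
(w.r.t. the distance formula `d = δ_{≤r}`) of quantifier rank at most `q` satisfied by `u`. -/
def ltp {L : FirstOrder.Language} (d : L.Formula (Fin 2)) (q : ℕ) (M : Type w) [L.Structure M]
    {k : ℕ} (u : Fin k → M) : Set (L.Formula (Fin k)) :=
  {φ | SynLocal d φ ∧ qRank φ ≤ q ∧ φ.Realize u}

/-- The first-order `q`-type of a tuple `u` in `M`: the set of formulas of quantifier rank
at most `q` (with free variables among `x_0, …, x_{k-1}`) satisfied by `u`. -/
def ftp {L : FirstOrder.Language} (q : ℕ) (M : Type w) [L.Structure M]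
    {k : ℕ} (u : Fin k → M) : Set (L.Formula (Fin k)) :=
  {φ | qRank φ ≤ q ∧ φ.Realize u}

/-- The union of two disjoint structures (realized as a structure on the sum type):
a relation holds of a tuple iff the tuple lies entirely in one part and the relation
holds there. -/
def sumStructure (L : FirstOrder.Language) [L.IsRelational] (M N : Type w)
    [L.Structure M] [L.Structure N] : L.Structure (M ⊕ N) where
  funMap f _ := isEmptyElim f
  RelMap R t :=
    (∃ s, t = Sum.inl ∘ s ∧ Structure.RelMap R s) ∨
    (∃ s, t = Sum.inr ∘ s ∧ Structure.RelMap R s)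

/-- The substructure of `M` induced on a subset `S`. -/
def inducedStructure (L : FirstOrder.Language) [L.IsRelational] {M : Type w} [L.Structure M]
    (S : Set M) : L.Structure S where
  funMap f _ := isEmptyElim f
  RelMap R t := Structure.RelMap R fun i => (t i : M)

/-- A formula `φ(x_1, …, x_k)` is `r`-local if for every structure `M` and every tuple `u`,
`M ⊨ φ(u)` iff the substructure induced on the `r`-neighbourhood of `u` satisfies `φ(u)`. -/
def RLocal.{v} (L : FirstOrder.Language) [L.IsRelational] (r : ℕ) {k : ℕ}
    (φ : L.Formula (Fin k)) : Prop :=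
  ∀ (M : Type v) [L.Structure M] (u : Fin k → M),
    φ.Realize u ↔
      (letI := inducedStructure L (nbhd L M r u)
       Formula.Realize (M := nbhd L M r u) φ
         (fun i => ⟨u i, i, distLE_self L M r (u i)⟩))


section GaifmanDistance

variable {L : FirstOrder.Language} {B : Type w} [L.Structure B]

theorem gaifmanAdj.symm {a b : B} (h : gaifmanAdj L B a b) : gaifmanAdj L B b a := by
  obtain ⟨hne, n, R, t, hR, hi, hj⟩ := h
  exact ⟨hne.symm, n, R, t, hR, hj, hi⟩

theorem gaifmanAdj.distLE_one {a b : B} (h : gaifmanAdj L B a b) : distLE L B 1 a b :=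
  Or.inr ⟨b, h, rfl⟩

theorem distLE_succ {r : ℕ} : ∀ {a b : B}, distLE L B r a b → distLE L B (r + 1) a b := by
  induction r with
  | zero => exact fun h => Or.inl h
  | succ r ih =>
    rintro a b (h | ⟨c, hc, h⟩)
    · exact Or.inl h
    · exact Or.inr ⟨c, hc, ih h⟩

theorem distLE_mono {r s : ℕ} (hrs : r ≤ s) {a b : B} (h : distLE L B r a b) :
    distLE L B s a b := by
  induction hrs with
  | refl => exact h
  | step _ ih => exact distLE_succ ih

theorem distLE_trans {r s t : ℕ} (hrs : r + s ≤ t) {a b c : B} (h₁ : distLE L B r a b)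
    (h₂ : distLE L B s b c) : distLE L B t a c := by
  refine distLE_mono hrs ?_
  clear hrs
  induction r generalizing a with
  | zero =>
    obtain rfl : a = b := h₁
    exact distLE_mono (by omega) h₂
  | succ r ih =>
    obtain rfl | ⟨e, he, h⟩ := h₁
    · exact distLE_mono (by omega) h₂
    · rw [show r + 1 + s = (r + s) + 1 by omega]
      exact Or.inr ⟨e, he, ih h⟩

theorem distLE_symm {r : ℕ} {a b : B} (h : distLE L B r a b) : distLE L B r b a := by
  induction r generalizing a with
  | zero => exact Eq.symm h
  | succ r ih =>
    obtain rfl | ⟨e, he, h⟩ := h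
    · exact distLE_self _ _ _ _
    · exact distLE_trans le_rfl (ih h) he.symm.distLE_one

theorem gaifmanAdj_of_relMap {n : ℕ} {R : L.Relations n} {t : Fin n → B}
    (hR : Structure.RelMap R t) (i j : Fin n) : distLE L B 1 (t i) (t j) := by
  by_cases h : t i = t j
  · exact Or.inl h
  · exact gaifmanAdj.distLE_one ⟨h, n, R, t, hR, ⟨i, rfl⟩, ⟨j, rfl⟩⟩

variable (L) in
/-- The set of elements at Gaifman distance at most `r` from a set. -/
def setNbhd (r : ℕ) (A : Set B) : Set B := {b | ∃ a ∈ A, distLE L B r a b}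

theorem setNbhd_insert (r : ℕ) (a : B) (A : Set B) :
    setNbhd L r (insert a A) = setNbhd L r {a} ∪ setNbhd L r A := by
  ext b
  simp [setNbhd]

theorem subset_setNbhd (r : ℕ) (A : Set B) : A ⊆ setNbhd L r A :=
  fun a ha => ⟨a, ha, distLE_self _ _ _ _⟩

theorem setNbhd_mono {r s : ℕ} (h : r ≤ s) (A : Set B) : setNbhd L r A ⊆ setNbhd L s A :=
  fun _ ⟨a, ha, hb⟩ => ⟨a, ha, distLE_mono h hb⟩

theorem mem_setNbhd_of_distLE {r s t : ℕ} (h : r + s ≤ t) {A : Set B} {b c : B}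
    (hb : b ∈ setNbhd L r A) (hbc : distLE L B s b c) : c ∈ setNbhd L t A := by
  obtain ⟨a, ha, hab⟩ := hb
  exact ⟨a, ha, distLE_trans h hab hbc⟩

theorem setNbhd_singleton_subset {r s t : ℕ} (h : r + s ≤ t) {A : Set B} {b : B}
    (hb : b ∈ setNbhd L r A) : setNbhd L s {b} ⊆ setNbhd L t A := by
  rintro c ⟨_, rfl, hc⟩
  exact mem_setNbhd_of_distLE h hb hc

theorem nbhd_eq_setNbhd (r : ℕ) {k : ℕ} (u : Fin k → B) :
    nbhd L B r u = setNbhd L r (Set.range u) := by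
  ext b
  simp [nbhd, setNbhd]

end GaifmanDistance

section Games

variable (L : FirstOrder.Language) {B : Type w} [L.Structure B]

/-- A set of pairs is a partial isomorphism if it preserves and reflects equality and all
relations. -/
def IsPartialIso (p : Set (B × B)) : Prop :=
  (∀ x ∈ p, ∀ y ∈ p, x.1 = y.1 ↔ x.2 = y.2) ∧
    ∀ (n : ℕ) (R : L.Relations n) (t : Fin n → B × B), (∀ i, t i ∈ p) →
      (Structure.RelMap R (fun i => (t i).1) ↔ Structure.RelMap R (fun i => (t i).2))

/-- Duplicator wins the `k`-round Ehrenfeucht–Fraïssé game from position `p`, where moves in the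
first and second component are restricted to `S` and `T`. -/
def GameEquiv : ℕ → Set B → Set B → Set (B × B) → Prop
  | 0, _, _, p => IsPartialIso L p
  | k + 1, S, T, p => IsPartialIso L p ∧
      (∀ x ∈ S, ∃ y ∈ T, GameEquiv k S T (insert (x, y) p)) ∧
      (∀ y ∈ T, ∃ x ∈ S, GameEquiv k S T (insert (x, y) p))

variable {L}

theorem IsPartialIso.mono {p q : Set (B × B)} (hqp : q ⊆ p) (h : IsPartialIso L p) :
    IsPartialIso L q :=
  ⟨fun x hx y hy => h.1 x (hqp hx) y (hqp hy), fun n R t ht => h.2 n R t fun i => hqp (ht i)⟩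

theorem IsPartialIso.symm {p : Set (B × B)} (h : IsPartialIso L p) :
    IsPartialIso L (Prod.swap '' p) := by
  refine ⟨?_, fun n R t ht => ?_⟩
  · rintro _ ⟨x, hx, rfl⟩ _ ⟨y, hy, rfl⟩
    exact (h.1 x hx y hy).symm
  · choose s hs hst using ht
    obtain rfl : (fun i => (s i).swap) = t := funext hst
    exact (h.2 n R s hs).symm

namespace GameEquiv

variable {S T U : Set B} {p q : Set (B × B)} {k l : ℕ}

theorem isPartialIso (h : GameEquiv L k S T p) : IsPartialIso L p := by
  cases k with
  | zero => exact h
  | succ k => exact h.1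

theorem of_subset (hqp : q ⊆ p) (h : GameEquiv L k S T p) : GameEquiv L k S T q := by
  induction k generalizing p q with
  | zero => exact IsPartialIso.mono hqp h
  | succ k ih =>
    refine ⟨h.1.mono hqp, fun x hx => ?_, fun y hy => ?_⟩
    · obtain ⟨y, hy, h'⟩ := h.2.1 x hx
      exact ⟨y, hy, ih (Set.insert_subset_insert hqp) h'⟩
    · obtain ⟨x, hx, h'⟩ := h.2.2 y hy
      exact ⟨x, hx, ih (Set.insert_subset_insert hqp) h'⟩

theorem of_succ (h : GameEquiv L (k + 1) S T p) : GameEquiv L k S T p := by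
  induction k generalizing p with
  | zero => exact h.1
  | succ k ih =>
    refine ⟨h.1, fun x hx => ?_, fun y hy => ?_⟩
    · obtain ⟨y, hy, h'⟩ := h.2.1 x hx
      exact ⟨y, hy, ih h'⟩
    · obtain ⟨x, hx, h'⟩ := h.2.2 y hy
      exact ⟨x, hx, ih h'⟩

theorem of_le (hlk : l ≤ k) (h : GameEquiv L k S T p) : GameEquiv L l S T p := by
  induction hlk with
  | refl => exact h
  | step _ ih => exact ih h.of_succ

theorem symm (h : GameEquiv L k S T p) : GameEquiv L k T S (Prod.swap '' p) := by
  induction k generalizing p with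
  | zero => exact IsPartialIso.symm h
  | succ k ih =>
    refine ⟨h.1.symm, fun y hy => ?_, fun x hx => ?_⟩
    · obtain ⟨x, hx, h'⟩ := h.2.2 y hy
      exact ⟨x, hx, by simpa [Set.image_insert_eq] using ih h'⟩
    · obtain ⟨y, hy, h'⟩ := h.2.1 x hx
      exact ⟨y, hy, by simpa [Set.image_insert_eq] using ih h'⟩

theorem refl (hp : ∀ x ∈ p, x.1 = x.2) : GameEquiv L k S S p := by
  have hiso : IsPartialIso L p := by
    refine ⟨fun x hx y hy => by rw [hp x hx, hp y hy], fun n R t ht => ?_⟩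
    rw [show (fun i => (t i).1) = fun i => (t i).2 from funext fun i => hp _ (ht i)]
  induction k generalizing p with
  | zero => exact hiso
  | succ k ih =>
    have hins : ∀ x : B, ∀ z ∈ insert (x, x) p, z.1 = z.2 := by
      rintro x z (rfl | hz)
      · rfl
      · exact hp z hz
    have hiso' : ∀ x : B, IsPartialIso L (insert (x, x) p) := by
      refine fun x => ⟨fun y hy z hz => by rw [hins x y hy, hins x z hz], fun n R t ht => ?_⟩
      rw [show (fun i => (t i).1) = fun i => (t i).2 from funext fun i => hins x _ (ht i)]
    exact ⟨hiso, fun x hx => ⟨x, hx, ih (hins x) (hiso' x)⟩,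
      fun x hx => ⟨x, hx, ih (hins x) (hiso' x)⟩⟩

theorem trans {s : Set (B × B)} (h₁ : GameEquiv L k S T p) (h₂ : GameEquiv L k T U q)
    (hs : ∀ x ∈ s, ∃ y, (x.1, y) ∈ p ∧ (y, x.2) ∈ q) : GameEquiv L k S U s := by
  have hiso : IsPartialIso L s := by
    refine ⟨fun x hx y hy => ?_, fun n R t ht => ?_⟩
    · obtain ⟨a, ha, ha'⟩ := hs x hx
      obtain ⟨b, hb, hb'⟩ := hs y hy
      exact (h₁.isPartialIso.1 _ ha _ hb).trans (h₂.isPartialIso.1 _ ha' _ hb')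
    · choose a ha ha' using fun i => hs _ (ht i)
      exact (h₁.isPartialIso.2 n R (fun i => ((t i).1, a i)) ha).trans
        (h₂.isPartialIso.2 n R (fun i => (a i, (t i).2)) ha')
  induction k generalizing p q s with
  | zero => exact hiso
  | succ k ih =>
    have key : ∀ x y z, GameEquiv L k S T (insert (x, y) p) →
        GameEquiv L k T U (insert (y, z) q) → GameEquiv L k S U (insert (x, z) s) := by
      intro x y z h₁ h₂
      have hs' : ∀ w ∈ insert (x, z) s,
          ∃ a, (w.1, a) ∈ insert (x, y) p ∧ (a, w.2) ∈ insert (y, z) q := by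
        rintro w (rfl | hw)
        · exact ⟨y, Or.inl rfl, Or.inl rfl⟩
        · obtain ⟨a, ha, ha'⟩ := hs w hw
          exact ⟨a, Or.inr ha, Or.inr ha'⟩
      refine ih h₁ h₂ hs' ⟨fun v hv w hw => ?_, fun n R t ht => ?_⟩
      · obtain ⟨a, ha, ha'⟩ := hs' v hv
        obtain ⟨b, hb, hb'⟩ := hs' w hw
        exact (h₁.isPartialIso.1 _ ha _ hb).trans (h₂.isPartialIso.1 _ ha' _ hb')
      · choose a ha ha' using fun i => hs' _ (ht i)
        exact (h₁.isPartialIso.2 n R (fun i => ((t i).1, a i)) ha).trans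
          (h₂.isPartialIso.2 n R (fun i => (a i, (t i).2)) ha')
    refine ⟨hiso, fun x hx => ?_, fun z hz => ?_⟩
    · obtain ⟨y, hy, h₁'⟩ := h₁.2.1 x hx
      obtain ⟨z, hz, h₂'⟩ := h₂.2.1 y hy
      exact ⟨z, hz, key x y z h₁' h₂'⟩
    · obtain ⟨y, hy, h₂'⟩ := h₂.2.2 z hz
      obtain ⟨x, hx, h₁'⟩ := h₁.2.2 y hy
      exact ⟨x, hx, key x y z h₁' h₂'⟩

/-- Spoiler's choice of `n` elements of `S` is answered in `n` rounds. -/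
theorem exists_answers {n : ℕ} (h : GameEquiv L (n + k) S T p) (s : Fin n → B)
    (hs : ∀ i, s i ∈ S) :
    ∃ q, p ⊆ q ∧ GameEquiv L k S T q ∧ ∃ t : Fin n → B, ∀ i, t i ∈ T ∧ (s i, t i) ∈ q := by
  induction n generalizing k with
  | zero =>
    rw [Nat.zero_add] at h
    exact ⟨p, subset_rfl, h, Fin.elim0, fun i => i.elim0⟩
  | succ n ih =>
    rw [show n + 1 + k = n + (k + 1) by omega] at h
    obtain ⟨q, hpq, hq, t, ht⟩ := ih h (fun i => s i.castSucc) fun i => hs _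
    obtain ⟨y, hy, hq'⟩ := hq.2.1 _ (hs (Fin.last n))
    refine ⟨_, hpq.trans (Set.subset_insert _ _), hq', Fin.snoc t y, fun i => ?_⟩
    refine Fin.lastCases ?_ (fun i => ?_) i
    · simp [hy]
    · simpa using ⟨(ht i).1, Or.inr (ht i).2⟩

theorem gaifmanAdj_of_mem {N : ℕ} (hN : ∀ n, L.Relations n → n ≤ N)
    (h : GameEquiv L N S T p) {x y x' y' : B} (hx : (x, y) ∈ p) (hx' : (x', y') ∈ p)
    (hS : setNbhd L 1 {x} ⊆ S) (hadj : gaifmanAdj L B x x') : gaifmanAdj L B y y' := by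
  obtain ⟨hne, n, R, s, hR, ⟨i, rfl⟩, ⟨j, rfl⟩⟩ := hadj
  obtain ⟨q, hpq, hq, t, ht⟩ := exists_answers (k := 0) (h.of_le (hN n R)) s
    fun l => hS ⟨_, rfl, gaifmanAdj_of_relMap hR i l⟩
  have hiso := hq.isPartialIso
  refine ⟨fun hy => hne ((h.isPartialIso.1 _ hx _ hx').2 hy), n, R, t, ?_, ⟨i, ?_⟩, ⟨j, ?_⟩⟩
  · exact (hiso.2 n R (fun l => (s l, t l)) fun l => (ht l).2).1 hR
  · exact (hiso.1 _ (ht i).2 _ (hpq hx)).1 rfl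
  · exact (hiso.1 _ (ht j).2 _ (hpq hx')).1 rfl

theorem distLE_of_mem {N : ℕ} (hN : ∀ n, L.Relations n → n ≤ N) {t : ℕ}
    (h : GameEquiv L (t + N) S T p) {x y x' y' : B} (hx : (x, y) ∈ p) (hx' : (x', y') ∈ p)
    (hS : setNbhd L t {x} ⊆ S) (hd : distLE L B t x x') : distLE L B t y y' := by
  induction t generalizing p x y with
  | zero => exact (h.isPartialIso.1 _ hx _ hx').1 hd
  | succ t ih =>
    obtain rfl | ⟨c, hc, hd⟩ := hd
    · exact Or.inl ((h.isPartialIso.1 _ hx _ hx').1 rfl)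
    · have hcS : c ∈ setNbhd L 1 {x} := ⟨x, rfl, hc.distLE_one⟩
      rw [show t + 1 + N = t + N + 1 by omega] at h
      obtain ⟨c', -, h'⟩ := h.2.1 c (hS (setNbhd_mono (by omega) _ hcS))
      refine Or.inr ⟨c', ?_, ih h' (Or.inl rfl) (Or.inr hx') ?_ hd⟩
      · exact gaifmanAdj_of_mem hN (h'.of_le (by omega)) (Or.inr hx) (Or.inl rfl)
          ((setNbhd_mono (by omega) _).trans hS) hc
      · exact (setNbhd_singleton_subset (by omega) hcS).trans hS

theorem restrict {N : ℕ} (hN : ∀ n, L.Relations n → n ≤ N) {r : ℕ}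
    (h : GameEquiv L (k + (r + N)) S T p) (hqp : q ⊆ p)
    (hS : setNbhd L r (Prod.fst '' q) ⊆ S) (hT : setNbhd L r (Prod.snd '' q) ⊆ T) :
    GameEquiv L k (setNbhd L r (Prod.fst '' q)) (setNbhd L r (Prod.snd '' q)) p := by
  induction k generalizing p with
  | zero => exact h.isPartialIso
  | succ k ih =>
    rw [show k + 1 + (r + N) = k + (r + N) + 1 by omega] at h
    refine ⟨h.isPartialIso, fun x hx => ?_, fun y hy => ?_⟩
    · obtain ⟨y, hy, h'⟩ := h.2.1 x (hS hx)
      refine ⟨y, ?_, ih h' (hqp.trans (Set.subset_insert _ _))⟩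
      obtain ⟨_, ⟨⟨a, b⟩, hab, rfl⟩, hd⟩ := hx
      refine ⟨b, ⟨_, hab, rfl⟩, ?_⟩
      refine distLE_of_mem hN (h'.of_le (by omega)) (Or.inr (hqp hab)) (Or.inl rfl) ?_ hd
      rintro z ⟨_, rfl, hz⟩
      exact hS ⟨_, ⟨_, hab, rfl⟩, hz⟩
    · obtain ⟨x, hx, h'⟩ := h.2.2 y (hT hy)
      refine ⟨x, ?_, ih h' (hqp.trans (Set.subset_insert _ _))⟩
      obtain ⟨_, ⟨⟨a, b⟩, hab, rfl⟩, hd⟩ := hy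
      refine ⟨a, ⟨_, hab, rfl⟩, ?_⟩
      refine distLE_of_mem hN (h'.symm.of_le (k := k + (r + N)) (by omega))
        ⟨_, Or.inr (hqp hab), rfl⟩ ⟨_, Or.inl rfl, rfl⟩ ?_ hd
      rintro z ⟨_, rfl, hz⟩
      exact hT ⟨_, ⟨_, hab, rfl⟩, hz⟩

theorem relMap_of_union {p₁ p₂ : Set (B × B)} (h₁ : IsPartialIso L p₁) (h₂ : IsPartialIso L p₂)
    (hsep : ∀ x ∈ p₁, ∀ y ∈ p₂, ¬ distLE L B 1 x.1 y.1) {n : ℕ} {R : L.Relations n}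
    {t : Fin n → B × B} (ht : ∀ i, t i ∈ p₁ ∪ p₂)
    (hR : Structure.RelMap R fun i => (t i).1) : Structure.RelMap R fun i => (t i).2 := by
  by_cases h : ∀ i, t i ∈ p₁
  · exact (h₁.2 n R t h).1 hR
  · push Not at h
    obtain ⟨j, hj⟩ := h
    refine (h₂.2 n R t fun i => ?_).1 hR
    refine (ht i).resolve_left fun hi => ?_
    exact hsep _ hi _ ((ht j).resolve_left hj) (gaifmanAdj_of_relMap hR i j)

theorem _root_.IsPartialIso.union {p₁ p₂ : Set (B × B)} (h₁ : IsPartialIso L p₁)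
    (h₂ : IsPartialIso L p₂) (hsep : ∀ x ∈ p₁, ∀ y ∈ p₂, ¬ distLE L B 1 x.1 y.1)
    (hsep' : ∀ x ∈ p₁, ∀ y ∈ p₂, ¬ distLE L B 1 x.2 y.2) : IsPartialIso L (p₁ ∪ p₂) := by
  refine ⟨?_, fun n R t ht => ⟨relMap_of_union h₁ h₂ hsep ht, fun hR => ?_⟩⟩
  · rintro x (hx | hx) y (hy | hy)
    · exact h₁.1 x hx y hy
    · exact iff_of_false (fun h => hsep x hx y hy (Or.inl h))
        (fun h => hsep' x hx y hy (Or.inl h))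
    · exact iff_of_false (fun h => hsep y hy x hx (Or.inl h.symm))
        (fun h => hsep' y hy x hx (Or.inl h.symm))
    · exact h₂.1 x hx y hy
  · refine relMap_of_union (t := fun i => (t i).swap) h₁.symm h₂.symm ?_ (fun i => ?_) hR
    · rintro _ ⟨x, hx, rfl⟩ _ ⟨y, hy, rfl⟩
      exact hsep' x hx y hy
    · exact (ht i).imp (fun h => ⟨_, h, rfl⟩) fun h => ⟨_, h, rfl⟩

theorem union {S₁ S₂ T₁ T₂ : Set B} {p₁ p₂ : Set (B × B)}
    (hS : ∀ x ∈ S₁, ∀ y ∈ S₂, ¬ distLE L B 1 x y) (hT : ∀ x ∈ T₁, ∀ y ∈ T₂, ¬ distLE L B 1 x y)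
    (hp₁ : p₁ ⊆ S₁ ×ˢ T₁) (hp₂ : p₂ ⊆ S₂ ×ˢ T₂)
    (h₁ : GameEquiv L k S₁ T₁ p₁) (h₂ : GameEquiv L k S₂ T₂ p₂) :
    GameEquiv L k (S₁ ∪ S₂) (T₁ ∪ T₂) (p₁ ∪ p₂) := by
  have hiso : IsPartialIso L (p₁ ∪ p₂) := h₁.isPartialIso.union h₂.isPartialIso
    (fun x hx y hy => hS _ (hp₁ hx).1 _ (hp₂ hy).1)
    (fun x hx y hy => hT _ (hp₁ hx).2 _ (hp₂ hy).2)
  induction k generalizing p₁ p₂ with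
  | zero => exact hiso
  | succ k ih =>
    have left : ∀ x ∈ S₁, ∀ y ∈ T₁, GameEquiv L k S₁ T₁ (insert (x, y) p₁) →
        GameEquiv L k (S₁ ∪ S₂) (T₁ ∪ T₂) (insert (x, y) (p₁ ∪ p₂)) := by
      intro x hx y hy h
      have hp : insert (x, y) p₁ ⊆ S₁ ×ˢ T₁ := Set.insert_subset ⟨hx, hy⟩ hp₁
      rw [← Set.insert_union]
      exact ih hp hp₂ h h₂.of_succ (h.isPartialIso.union h₂.isPartialIso
        (fun x hx y hy => hS _ (hp hx).1 _ (hp₂ hy).1)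
        (fun x hx y hy => hT _ (hp hx).2 _ (hp₂ hy).2))
    have right : ∀ x ∈ S₂, ∀ y ∈ T₂, GameEquiv L k S₂ T₂ (insert (x, y) p₂) →
        GameEquiv L k (S₁ ∪ S₂) (T₁ ∪ T₂) (insert (x, y) (p₁ ∪ p₂)) := by
      intro x hx y hy h
      have hp : insert (x, y) p₂ ⊆ S₂ ×ˢ T₂ := Set.insert_subset ⟨hx, hy⟩ hp₂
      rw [← Set.union_insert]
      exact ih hp₁ hp h₁.of_succ h (h₁.isPartialIso.union h.isPartialIso
        (fun x hx y hy => hS _ (hp₁ hx).1 _ (hp hy).1)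
        (fun x hx y hy => hT _ (hp₁ hx).2 _ (hp hy).2))
    refine ⟨hiso, ?_, ?_⟩
    · rintro x (hx | hx)
      · obtain ⟨y, hy, h⟩ := h₁.2.1 x hx
        exact ⟨y, Or.inl hy, left x hx y hy h⟩
      · obtain ⟨y, hy, h⟩ := h₂.2.1 x hx
        exact ⟨y, Or.inr hy, right x hx y hy h⟩
    · rintro y (hy | hy)
      · obtain ⟨x, hx, h⟩ := h₁.2.2 y hy
        exact ⟨x, Or.inl hx, left x hx y hy h⟩
      · obtain ⟨x, hx, h⟩ := h₂.2.2 y hy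
        exact ⟨x, Or.inr hx, right x hx y hy h⟩

end GameEquiv

/-- If Duplicator wins a long local game on `p`, then every type realised far away from the first
components of `p` is realised far away from the second components. -/
theorem GameEquiv.exists_far {N : ℕ} (hN : ∀ n, L.Relations n → n ≤ N) {r R K m : ℕ}
    (hR : 7 * r + 3 ≤ R) {v : Fin m → B × B}
    (h : GameEquiv L (m + 1 + (K + (5 * r + 2 + N))) (setNbhd L R (Prod.fst '' Set.range v))
      (setNbhd L R (Prod.snd '' Set.range v)) (Set.range v)) {a : B}
    (ha : a ∉ setNbhd L (6 * r + 3) (Prod.fst '' Set.range v)) :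
    ∃ b, b ∉ setNbhd L (2 * r + 1) (Prod.snd '' Set.range v) ∧
      GameEquiv L K (setNbhd L r {a}) (setNbhd L r {b}) {(a, b)} := by
  set A := Prod.fst '' Set.range v with hA
  set A' := Prod.snd '' Set.range v with hA'
  by_contra! hcon
  replace hcon : ∀ b, GameEquiv L K (setNbhd L r {a}) (setNbhd L r {b}) {(a, b)} →
      b ∈ setNbhd L (2 * r + 1) A' := fun b hb => by_contra fun hb' => hcon b hb' hb
  have scattered : ∀ j ≤ m + 1, ∃ s : Fin j → B,
      (∀ i, s i ∈ setNbhd L (2 * r + 1) A ∧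
        GameEquiv L K (setNbhd L r {a}) (setNbhd L r {s i}) {(a, s i)}) ∧
      ∀ i l, i ≠ l → ¬ distLE L B (4 * r + 2) (s i) (s l) := by
    intro j
    induction j with
    | zero => exact fun _ => ⟨Fin.elim0, fun i => i.elim0, fun i => i.elim0⟩
    | succ j ih =>
      intro hj
      obtain ⟨s₀, hs₀, hsep₀⟩ := ih (by omega)
      have hfar : ∀ i, ¬ distLE L B (4 * r + 2) (s₀ i) a := fun i hd =>
        ha (mem_setNbhd_of_distLE (by omega) (hs₀ i).1 hd)
      obtain ⟨s, hs, hsep⟩ : ∃ s : Fin (j + 1) → B,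
          (∀ i, GameEquiv L K (setNbhd L r {a}) (setNbhd L r {s i}) {(a, s i)}) ∧
          ∀ i l, i ≠ l → ¬ distLE L B (4 * r + 2) (s i) (s l) := by
        refine ⟨Fin.snoc s₀ a, fun i => ?_, fun i l => ?_⟩
        · refine Fin.lastCases ?_ (fun i => ?_) i
          · rw [Fin.snoc_last]
            exact GameEquiv.refl (by simp)
          · rw [Fin.snoc_castSucc]
            exact (hs₀ i).2
        · refine Fin.lastCases ?_ (fun i => ?_) i <;> refine Fin.lastCases ?_ (fun l => ?_) l
          · exact fun hne => absurd rfl hne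
          · rw [Fin.snoc_last, Fin.snoc_castSucc]
            exact fun _ hd => hfar l (distLE_symm hd)
          · rw [Fin.snoc_last, Fin.snoc_castSucc]
            exact fun _ => hfar i
          · rw [Fin.snoc_castSucc, Fin.snoc_castSucc]
            exact fun hne => hsep₀ i l fun hil => hne (by rw [hil])
      have hsA' : ∀ i, s i ∈ setNbhd L (2 * r + 1) A' := fun i => hcon _ (hs i)
      obtain ⟨q, hpq, hq, t, ht⟩ := GameEquiv.exists_answers
        (h.symm.of_le (l := j + 1 + (K + (5 * r + 2 + N))) (by omega)) s
        fun i => setNbhd_mono (by omega) _ (hsA' i)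
      have htA : ∀ i, t i ∈ setNbhd L (2 * r + 1) A := by
        intro i
        obtain ⟨_, ⟨x, hx, rfl⟩, hd⟩ := hsA' i
        refine ⟨x.1, ⟨x, hx, rfl⟩, ?_⟩
        refine GameEquiv.distLE_of_mem hN (hq.of_le (by omega)) (hpq ⟨x, hx, rfl⟩) (ht i).2 ?_ hd
        exact setNbhd_singleton_subset (r := 0) (by omega) (subset_setNbhd _ _ ⟨x, hx, rfl⟩)
      refine ⟨t, fun i => ⟨htA i, ?_⟩, fun i l hil hd => hsep i l hil ?_⟩
      · have hres := GameEquiv.restrict (k := K) (r := r) (q := {(s i, t i)}) hN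
          (hq.of_le (by omega)) (by simpa using (ht i).2)
          (by simpa using setNbhd_singleton_subset (by omega) (hsA' i))
          (by simpa using setNbhd_singleton_subset (by omega) (htA i))
        simp only [Set.image_singleton] at hres
        refine (hs i).trans hres ?_
        rintro _ rfl
        exact ⟨s i, rfl, (ht i).2⟩
      · exact GameEquiv.distLE_of_mem hN (hq.symm.of_le (by omega)) ⟨_, (ht i).2, rfl⟩
          ⟨_, (ht l).2, rfl⟩ (setNbhd_singleton_subset (by omega) (htA i)) hd
  obtain ⟨s, hs, hsep⟩ := scattered (m + 1) le_rfl
  have hcenter : ∀ i, ∃ l : Fin m, distLE L B (2 * r + 1) (v l).1 (s i) := by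
    intro i
    obtain ⟨_, ⟨_, ⟨l, rfl⟩, rfl⟩, hd⟩ := (hs i).1
    exact ⟨l, hd⟩
  choose f hf using hcenter
  obtain ⟨i, l, hil, hfil⟩ := Fintype.exists_ne_map_eq_of_card_lt f (by simp)
  exact hsep i l hil (distLE_trans (by omega) (distLE_symm (hf i)) (hfil ▸ hf l))

/-- One forth step of the full game is answered while preserving local game equivalence. -/
theorem GameEquiv.exists_forth {N : ℕ} (hN : ∀ n, L.Relations n → n ≤ N) {r K m : ℕ}
    {v : Fin m → B × B}
    (h : GameEquiv L (m + 1 + (K + (6 * r + 3 + N)))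
      (setNbhd L (7 * r + 3) (Prod.fst '' Set.range v))
      (setNbhd L (7 * r + 3) (Prod.snd '' Set.range v)) (Set.range v)) (a : B) :
    ∃ b, GameEquiv L K (setNbhd L r (Prod.fst '' insert (a, b) (Set.range v)))
      (setNbhd L r (Prod.snd '' insert (a, b) (Set.range v))) (insert (a, b) (Set.range v)) := by
  by_cases ha : a ∈ setNbhd L (6 * r + 3) (Prod.fst '' Set.range v)
  · obtain ⟨b, -, h'⟩ := (h.of_le (l := K + (6 * r + 3 + N) + 1) (by omega)).2.1 a
      (setNbhd_mono (by omega) _ ha)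
    have hb : b ∈ setNbhd L (6 * r + 3) (Prod.snd '' Set.range v) := by
      obtain ⟨_, ⟨x, hx, rfl⟩, hd⟩ := ha
      refine ⟨x.2, ⟨x, hx, rfl⟩, ?_⟩
      refine GameEquiv.distLE_of_mem hN (h'.of_le (by omega)) (Or.inr hx) (Or.inl rfl) ?_ hd
      exact setNbhd_singleton_subset (r := 0) (by omega) (subset_setNbhd _ _ ⟨x, hx, rfl⟩)
    refine ⟨b, GameEquiv.restrict hN (h'.of_le (by omega)) subset_rfl ?_ ?_⟩
    · rw [Set.image_insert_eq, setNbhd_insert]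
      exact Set.union_subset (setNbhd_singleton_subset (by omega) ha) (setNbhd_mono (by omega) _)
    · rw [Set.image_insert_eq, setNbhd_insert]
      exact Set.union_subset (setNbhd_singleton_subset (by omega) hb) (setNbhd_mono (by omega) _)
  · obtain ⟨b, hb, hab⟩ := GameEquiv.exists_far (K := K) (r := r) hN (by omega)
      (h.of_le (by omega)) ha
    refine ⟨b, ?_⟩
    have hv : GameEquiv L K (setNbhd L r (Prod.fst '' Set.range v))
        (setNbhd L r (Prod.snd '' Set.range v)) (Set.range v) :=
      GameEquiv.restrict hN (h.of_le (by omega)) subset_rfl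
        (setNbhd_mono (by omega) _) (setNbhd_mono (by omega) _)
    have sep : ∀ {c : B} {A : Set B}, c ∉ setNbhd L (2 * r + 1) A →
        ∀ x ∈ setNbhd L r {c}, ∀ y ∈ setNbhd L r A, ¬ distLE L B 1 x y := by
      rintro c A hc x ⟨_, rfl, hx⟩ y hy hd
      exact hc (mem_setNbhd_of_distLE (by omega) hy
        (distLE_trans (t := r + 1) (by omega) (distLE_symm hd) (distLE_symm hx)))
    rw [Set.image_insert_eq, Set.image_insert_eq, setNbhd_insert, setNbhd_insert,
      Set.insert_eq (a, b)]
    refine GameEquiv.union (sep fun h => ha (setNbhd_mono (by omega) _ h)) (sep hb) ?_ ?_ hab hv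
    · rintro _ rfl
      exact ⟨subset_setNbhd _ _ rfl, subset_setNbhd _ _ rfl⟩
    · exact fun x hx => ⟨subset_setNbhd _ _ ⟨x, hx, rfl⟩, subset_setNbhd _ _ ⟨x, hx, rfl⟩⟩

variable (L) in
/-- Duplicator wins the `k`-round game on the whole structure as soon as she wins a sufficiently
long game on sufficiently large neighbourhoods. -/
theorem exists_gameEquiv_univ {N : ℕ} (hN : ∀ n, L.Relations n → n ≤ N) (k m : ℕ) :
    ∃ r K : ℕ, ∀ (B : Type w) [L.Structure B] (v : Fin m → B × B),
      GameEquiv L K (setNbhd L r (Prod.fst '' Set.range v))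
        (setNbhd L r (Prod.snd '' Set.range v)) (Set.range v) →
      GameEquiv L k Set.univ Set.univ (Set.range v) := by
  induction k generalizing m with
  | zero => exact ⟨0, 0, fun B _ v h => h⟩
  | succ k ih =>
    obtain ⟨r, K, hrK⟩ := ih (m + 1)
    refine ⟨7 * r + 3, m + 1 + (K + (6 * r + 3 + N)), fun B _ v h => ?_⟩
    have forth : ∀ w : Fin m → B × B,
        GameEquiv L (m + 1 + (K + (6 * r + 3 + N)))
          (setNbhd L (7 * r + 3) (Prod.fst '' Set.range w))
          (setNbhd L (7 * r + 3) (Prod.snd '' Set.range w)) (Set.range w) →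
        ∀ a, ∃ b, GameEquiv L k Set.univ Set.univ (insert (a, b) (Set.range w)) := by
      intro w hw a
      obtain ⟨b, hb⟩ := hw.exists_forth hN a
      refine ⟨b, ?_⟩
      rw [← Fin.range_cons (a, b) w] at hb ⊢
      exact hrK B _ hb
    refine ⟨h.isPartialIso, fun a _ => ?_, fun b _ => ?_⟩
    · obtain ⟨b, hb⟩ := forth v h a
      exact ⟨b, trivial, hb⟩
    · have hrange : Set.range (fun i => (v i).swap) = Prod.swap '' Set.range v :=
        Set.range_comp Prod.swap v
      obtain ⟨a, ha⟩ := forth (fun i => (v i).swap) (by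
        rw [hrange, Set.image_image, Set.image_image]
        exact h.symm) b
      rw [hrange] at ha
      refine ⟨a, trivial, ?_⟩
      simpa [Set.image_insert_eq, Set.image_image] using ha.symm

end Games

section Formulas

variable {L : FirstOrder.Language}

theorem realize_term_mem [L.IsRelational] {B : Type w} [L.Structure B] {β : Type*} (t : L.Term β)
    {p : Set (B × B)} {v v' : β → B} (h : ∀ i, (v i, v' i) ∈ p) :
    (t.realize v, t.realize v') ∈ p := by
  cases t with
  | var i => exact h i
  | func f _ => exact isEmptyElim f

/-- Game equivalence implies agreement on formulas of bounded quantifier rank. -/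
theorem GameEquiv.realize_iff [L.IsRelational] {B : Type w} [L.Structure B] {α : Type*} {n : ℕ}
    (ψ : L.BoundedFormula α n) {k : ℕ} (hψ : qRank ψ ≤ k) {p : Set (B × B)}
    (h : GameEquiv L k Set.univ Set.univ p) {v v' : α → B} {xs xs' : Fin n → B}
    (hv : ∀ i, (v i, v' i) ∈ p) (hxs : ∀ i, (xs i, xs' i) ∈ p) :
    ψ.Realize v xs ↔ ψ.Realize v' xs' := by
  induction ψ generalizing k p with
  | falsum => exact Iff.rfl
  | equal t₁ t₂ =>
    have hvar : ∀ i, (Sum.elim v xs i, Sum.elim v' xs' i) ∈ p := Sum.rec hv hxs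
    exact h.isPartialIso.1 _ (realize_term_mem t₁ hvar) _ (realize_term_mem t₂ hvar)
  | rel R ts =>
    have hvar : ∀ i, (Sum.elim v xs i, Sum.elim v' xs' i) ∈ p := Sum.rec hv hxs
    exact h.isPartialIso.2 _ R
      (fun i => ((ts i).realize (Sum.elim v xs), (ts i).realize (Sum.elim v' xs')))
      fun i => realize_term_mem (ts i) hvar
  | imp f g ihf ihg =>
    simp only [qRank, max_le_iff] at hψ
    exact imp_congr (ihf hψ.1 h hv hxs) (ihg hψ.2 h hv hxs)
  | all f ih =>
    obtain _ | k := k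
    · simp [qRank] at hψ
    simp only [qRank, Nat.add_le_add_iff_right] at hψ
    have step : ∀ x y, GameEquiv L k Set.univ Set.univ (insert (x, y) p) →
        (f.Realize v (Fin.snoc xs x) ↔ f.Realize v' (Fin.snoc xs' y)) := by
      refine fun x y hxy => ih hψ hxy (fun i => Or.inr (hv i)) fun i => ?_
      refine Fin.lastCases ?_ (fun i => ?_) i
      · simp
      · simpa using Or.inr (hxs i)
    constructor
    · intro hf y
      obtain ⟨x, -, hxy⟩ := h.2.2 y trivial
      exact (step x y hxy).1 (hf x)
    · intro hf x
      obtain ⟨y, -, hxy⟩ := h.2.1 x trivial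
      exact (step x y hxy).2 (hf y)

theorem realize_relativize_all {d : L.Formula (Fin 2)} {r : ℕ}
    (hd : IsDistFormula.{w} L r d) {B : Type w} [L.Structure B] {m n : ℕ}
    (f : L.BoundedFormula (Fin m) (n + 1)) (u : Fin m → B) (xs : Fin n → B) :
    (relativize d f.all).Realize u xs ↔
      ∀ b ∈ nbhd L B r u, (relativize d f).Realize u (Fin.snoc xs b) := by
  rw [relativize, BoundedFormula.realize_all]
  refine forall_congr' fun b => ?_
  rw [BoundedFormula.realize_imp, BoundedFormula.realize_foldr_sup]
  refine imp_congr ?_ Iff.rfl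
  simp only [List.mem_map, List.mem_finRange, true_and, exists_exists_eq_and, nbhd,
    Set.mem_ofPred_eq]
  refine exists_congr fun i => ?_
  rw [← hd B, BoundedFormula.realize_relabel, Formula.Realize]
  refine iff_of_eq (congrArg₂ _ (funext fun j => ?_) (Subsingleton.elim _ _))
  fin_cases j
  · rfl
  · exact Fin.snoc_last (α := fun _ => B) b xs

theorem exists_realize_relativize_iff_type (d : L.Formula (Fin 2)) {m n : ℕ}
    {F : Set (L.BoundedFormula (Fin m) n)} (hF : F.Finite)
    (G : Set (L.BoundedFormula (Fin m) n)) :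
    ∃ χ : L.BoundedFormula (Fin m) n, ∀ (B : Type w) [L.Structure B] (u : Fin m → B)
      (xs : Fin n → B), (relativize d χ).Realize u xs ↔
        ∀ φ ∈ F, ((relativize d φ).Realize u xs ↔ φ ∈ G) := by
  induction F, hF using Set.Finite.induction_on with
  | empty => exact ⟨.imp .falsum .falsum, fun B _ u xs => by simp [relativize]⟩
  | @insert φ F _ _ ih =>
    obtain ⟨χ, hχ⟩ := ih
    by_cases hφ : φ ∈ G
    · refine ⟨.imp (.imp χ (.imp φ .falsum)) .falsum, fun B _ u xs => ?_⟩
      simp only [relativize, BoundedFormula.realize_imp, hχ, Set.forall_mem_insert, hφ, iff_true]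
      simp only [BoundedFormula.Realize]
      tauto
    · refine ⟨.imp (.imp χ φ) .falsum, fun B _ u xs => ?_⟩
      simp only [relativize, BoundedFormula.realize_imp, hχ, Set.forall_mem_insert, hφ, iff_false]
      simp only [BoundedFormula.Realize]
      tauto

theorem exists_finite_isPartialIso [Finite L.Symbols] (d : L.Formula (Fin 2)) (m n : ℕ) :
    ∃ F : Set (L.BoundedFormula (Fin m) n), F.Finite ∧
      ∀ (B : Type w) [L.Structure B] (u u' : Fin m → B) (xs xs' : Fin n → B),
        (∀ φ ∈ F, (relativize d φ).Realize u xs ↔ (relativize d φ).Realize u' xs') →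
        IsPartialIso L (Set.range fun i => (Sum.elim u xs i, Sum.elim u' xs' i)) := by
  have : Finite (Σ l, L.Relations l) :=
    Finite.of_injective (Sum.inr : _ → L.Symbols) Sum.inr_injective
  refine ⟨Set.range (fun i : (Fin m ⊕ Fin n) × (Fin m ⊕ Fin n) =>
      BoundedFormula.equal (Term.var i.1) (Term.var i.2)) ∪
    Set.range (fun i : Σ R : (Σ l, L.Relations l), Fin R.1 → Fin m ⊕ Fin n =>
      BoundedFormula.rel i.1.2 fun j => Term.var (i.2 j)),
    (Set.finite_range _).union (Set.finite_range _), fun B _ u u' xs xs' h => ⟨?_, ?_⟩⟩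
  · rintro _ ⟨i, rfl⟩ _ ⟨j, rfl⟩
    simpa only [relativize, BoundedFormula.Realize, Term.realize_var] using
      h _ (Or.inl ⟨(i, j), rfl⟩)
  · intro l R t ht
    choose i hi using ht
    obtain rfl := funext hi
    simpa only [relativize, BoundedFormula.Realize, Term.realize_var] using
      h _ (Or.inr ⟨⟨⟨l, R⟩, i⟩, rfl⟩)

/-- Local game equivalence is determined by finitely many relativised formulas. -/
theorem exists_finite_gameEquiv [Finite L.Symbols] {d : L.Formula (Fin 2)} {r : ℕ}
    (hd : IsDistFormula.{w} L r d) (k m n : ℕ) :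
    ∃ F : Set (L.BoundedFormula (Fin m) n), F.Finite ∧
      ∀ (B : Type w) [L.Structure B] (u u' : Fin m → B) (xs xs' : Fin n → B),
        (∀ φ ∈ F, (relativize d φ).Realize u xs ↔ (relativize d φ).Realize u' xs') →
        GameEquiv L k (nbhd L B r u) (nbhd L B r u')
          (Set.range fun i => (Sum.elim u xs i, Sum.elim u' xs' i)) := by
  induction k generalizing n with
  | zero => exact exists_finite_isPartialIso d m n
  | succ k ih =>
    obtain ⟨F, hF, hFg⟩ := ih (n + 1)
    obtain ⟨F₀, hF₀, hF₀iso⟩ := exists_finite_isPartialIso.{w} d m n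
    choose χ hχ using exists_realize_relativize_iff_type.{w} d hF
    refine ⟨F₀ ∪ (fun G => BoundedFormula.all ((χ G).imp .falsum)) '' {G | G ⊆ F},
      hF₀.union (hF.finite_subsets.image _), fun B _ u u' xs xs' h => ?_⟩
    have answer : ∀ (u u' : Fin m → B) (xs xs' : Fin n → B),
        (∀ G ⊆ F, (relativize d (BoundedFormula.all ((χ G).imp .falsum))).Realize u xs ↔
          (relativize d (BoundedFormula.all ((χ G).imp .falsum))).Realize u' xs') →
        ∀ x ∈ nbhd L B r u, ∃ y ∈ nbhd L B r u', ∀ φ ∈ F,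
          (relativize d φ).Realize u (Fin.snoc xs x) ↔
            (relativize d φ).Realize u' (Fin.snoc xs' y) := by
      intro u u' xs xs' h x hx
      have hG := h {φ ∈ F | (relativize d φ).Realize u (Fin.snoc xs x)} (Set.sep_subset _ _)
      rw [realize_relativize_all hd, realize_relativize_all hd] at hG
      simp only [relativize, BoundedFormula.realize_imp, hχ] at hG
      by_contra! hcon
      refine hG.2 (fun y hy hy' => ?_) x hx fun φ hφ => by simp [hφ]
      obtain ⟨φ, hφ, hne⟩ := hcon y hy
      have := hy' φ hφ
      simp only [Set.mem_ofPred_eq, hφ, true_and] at this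
      tauto
    have extend : ∀ x y, (∀ φ ∈ F, (relativize d φ).Realize u (Fin.snoc xs x) ↔
          (relativize d φ).Realize u' (Fin.snoc xs' y)) →
        GameEquiv L k (nbhd L B r u) (nbhd L B r u') (insert (x, y)
          (Set.range fun i => (Sum.elim u xs i, Sum.elim u' xs' i))) := by
      intro x y hxy
      refine (hFg B u u' _ _ hxy).of_subset ?_
      rintro _ (rfl | ⟨i | i, rfl⟩)
      · exact ⟨Sum.inr (Fin.last n), by simp⟩
      · exact ⟨Sum.inl i, rfl⟩
      · exact ⟨Sum.inr i.castSucc, by simp⟩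
    have hG : ∀ G ⊆ F, _ := fun G hG => h _ (Or.inr ⟨G, hG, rfl⟩)
    refine ⟨hF₀iso B u u' xs xs' fun φ hφ => h φ (Or.inl hφ), fun x hx => ?_, fun y hy => ?_⟩
    · obtain ⟨y, hy, hxy⟩ := answer u u' xs xs' hG x hx
      exact ⟨y, hy, extend x y hxy⟩
    · obtain ⟨x, hx, hxy⟩ := answer u' u xs' xs (fun G hG' => (hG G hG').symm) y hy
      exact ⟨x, hx, extend x y fun φ hφ => (hxy φ hφ).symm⟩

theorem exists_arity_le [Finite L.Symbols] : ∃ N, ∀ n, L.Relations n → n ≤ N := by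
  have : Finite (Σ l, L.Relations l) :=
    Finite.of_injective (Sum.inr : _ → L.Symbols) Sum.inr_injective
  obtain ⟨N, hN⟩ := (Set.finite_range (Sigma.fst : (Σ l, L.Relations l) → ℕ)).bddAbove
  exact ⟨N, fun n R => hN ⟨⟨n, R⟩, rfl⟩⟩

end Formulas

/-- Lemma 4.1: for all `m, q` there are `q*, r*` such that tuples with the same
local `(q*, r*)`-type satisfy the same formulas of quantifier rank at most `q`.
Here `d r` is the formula `δ_{≤r}` used in the definition of syntactic `r`-locality. -/
theorem statement_2 {L : FirstOrder.Language} [L.IsRelational] [Finite L.Symbols]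
    (m q : ℕ) (d : ℕ → L.Formula (Fin 2)) (hd : ∀ r, IsDistFormula.{w} L r (d r)) :
    ∃ qs rs : ℕ, ∀ (B : Type w) [L.Structure B] (ψ : L.Formula (Fin m)), qRank ψ ≤ q →
      ∀ u u' : Fin m → B, ltp (d rs) qs B u = ltp (d rs) qs B u' →
        (ψ.Realize u ↔ ψ.Realize u') := by
  obtain ⟨N, hN⟩ := exists_arity_le (L := L)
  obtain ⟨r, K, hrK⟩ := exists_gameEquiv_univ.{w} L hN q m
  obtain ⟨F, hF, hFg⟩ := exists_finite_gameEquiv (hd r) K m 0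
  obtain ⟨qs, hqs⟩ := (hF.image fun φ => qRank (relativize (d r) φ)).bddAbove
  refine ⟨qs, r, fun B _ ψ hψ u u' h => ?_⟩
  have hagree : ∀ φ ∈ F, (relativize (d r) φ).Realize u default ↔
      (relativize (d r) φ).Realize u' default := by
    intro φ hφ
    have hmem := Set.ext_iff.1 h (relativize (d r) φ)
    have hrank : qRank (relativize (d r) φ) ≤ qs := hqs ⟨φ, hφ, rfl⟩
    simp only [ltp, Set.mem_ofPred_eq, hrank, true_and,
      show SynLocal (d r) (relativize (d r) φ) from ⟨φ, rfl⟩] at hmem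
    exact hmem
  have hgame := hFg B u u' default default hagree
  rw [nbhd_eq_setNbhd, nbhd_eq_setNbhd] at hgame
  have huniv := hrK B (fun i => (u i, u' i)) (by
    rw [← Set.range_comp, ← Set.range_comp]
    refine hgame.of_subset ?_
    rintro _ ⟨i, rfl⟩
    exact ⟨Sum.inl i, rfl⟩)
  exact huniv.realize_iff ψ hψ (fun i => ⟨i, rfl⟩) fun i => i.elim0
end

section
/- Gaifman's Locality Theorem: for every relational vocabulary ρ, every first-order formula φ(x̄) over ρ is logically equivalent to a Boolean combination of basic local sentences and local formulas with free variables among x̄. -/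
open FirstOrder FirstOrder.Language

universe w

/-- Boolean combinations of a set of formulas: the closure of the set under the Boolean
connectives (from `⊥` and `imp` all other Boolean connectives are definable). -/
inductive BoolComb {L : FirstOrder.Language} {k : ℕ} (S : Set (L.Formula (Fin k))) :
    L.Formula (Fin k) → Prop
  | base {φ} : φ ∈ S → BoolComb S φ
  | falsum : BoolComb S ⊥
  | imp {φ ψ} : BoolComb S φ → BoolComb S ψ → BoolComb S (φ.imp ψ)

/-- The basic local sentence `∃ x₁ … x_kk (⋀_{i < j} δ_{>2r}(x_i, x_j) ∧ ⋀_i ψ(x_i))` of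
radius `r`, regarded as a formula with (unused) free variables among `x_1, …, x_k`.
Here `d (2*r)` is the formula `δ_{≤2r}`. -/
def basicLocalSentence {L : FirstOrder.Language} (d : ℕ → L.Formula (Fin 2)) (r kk : ℕ)
    (ψ : L.Formula (Fin 1)) (k : ℕ) : L.Formula (Fin k) :=
  BoundedFormula.exs
    (((((List.finRange kk).product (List.finRange kk)).filter fun p => p.1 < p.2).map
        (fun p => (BoundedFormula.relabel
            (![Sum.inr p.1, Sum.inr p.2] : Fin 2 → (Fin k) ⊕ (Fin kk)) (d (2 * r))).not) ++
      (List.finRange kk).map fun i =>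
        BoundedFormula.relabel ((fun _ => Sum.inr i) : Fin 1 → (Fin k) ⊕ (Fin kk)) ψ).foldr
      (· ⊓ ·) ⊤)

section Distance

variable {L : FirstOrder.Language} {M : Type w} [L.Structure M]

/-- The distance between `a` and `b` in the Gaifman graph of the substructure induced on `S`
is at most `r`. -/
def distIn (L : FirstOrder.Language) {M : Type w} [L.Structure M] (S : Set M) : ℕ → M → M → Prop
  | 0, a, b => a = b
  | r + 1, a, b => a = b ∨ ∃ c, (a ≠ c ∧ ∃ (n : ℕ) (R : L.Relations n) (t : Fin n → M),
      Structure.RelMap R t ∧ (∀ i, t i ∈ S) ∧ (∃ i, t i = a) ∧ ∃ j, t j = c) ∧ distIn L S r c b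

/-- The `r`-neighbourhood of a family `u` in the substructure induced on `S`. -/
def ballIn (L : FirstOrder.Language) {M : Type w} [L.Structure M] {V : Type} (S : Set M) (r : ℕ)
    (u : V → M) : Set M :=
  {b | ∃ i, distIn L S r (u i) b}

theorem distIn_refl (S : Set M) (r : ℕ) (a : M) : distIn L S r a a := by
  cases r with
  | zero => rfl
  | succ r => exact Or.inl rfl

theorem distIn_mem {S : Set M} {r : ℕ} {a b : M} (h : distIn L S r a b) (ha : a ∈ S) : b ∈ S := by
  induction r generalizing a with
  | zero => obtain rfl : a = b := h; exact ha
  | succ r ih =>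
    rcases h with rfl | ⟨c, ⟨-, n, R, t, -, ht, -, j, rfl⟩, h⟩
    · exact ha
    · exact ih h (ht j)

theorem distIn_mono {S : Set M} {r s : ℕ} (hrs : r ≤ s) {a b : M} (h : distIn L S r a b) :
    distIn L S s a b := by
  induction r generalizing a s with
  | zero => obtain rfl : a = b := h; exact distIn_refl _ _ _
  | succ r ih =>
    obtain ⟨s, rfl⟩ : ∃ s', s = s' + 1 := ⟨s - 1, by omega⟩
    rcases h with rfl | ⟨c, hc, h⟩
    · exact Or.inl rfl
    · exact Or.inr ⟨c, hc, ih (by omega) h⟩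

theorem distIn_trans {S : Set M} {r s : ℕ} {a b c : M} (h : distIn L S r a b)
    (h' : distIn L S s b c) : distIn L S (r + s) a c := by
  induction r generalizing a with
  | zero => obtain rfl : a = b := h; simpa using h'
  | succ r ih =>
    rcases h with rfl | ⟨e, he, h⟩
    · exact distIn_mono (by omega) h'
    · rw [Nat.add_right_comm]
      exact Or.inr ⟨e, he, ih h⟩

theorem distIn_one_of_relMap {S : Set M} {n : ℕ} {R : L.Relations n} {t : Fin n → M}
    (hR : Structure.RelMap R t) (ht : ∀ i, t i ∈ S) (i j : Fin n) : distIn L S 1 (t i) (t j) := by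
  by_cases hij : t i = t j
  · exact Or.inl hij
  · exact Or.inr ⟨t j, ⟨hij, n, R, t, hR, ht, ⟨i, rfl⟩, ⟨j, rfl⟩⟩, rfl⟩

theorem distIn_symm {S : Set M} {r : ℕ} {a b : M} (h : distIn L S r a b) :
    distIn L S r b a := by
  induction r generalizing a with
  | zero => exact Eq.symm h
  | succ r ih =>
    rcases h with rfl | ⟨_, ⟨-, n, R, t, hR, ht, ⟨i, rfl⟩, j, rfl⟩, h⟩
    · exact Or.inl rfl
    · exact distIn_trans (ih h) (distIn_one_of_relMap hR ht j i)

theorem distIn_mono_set {S T : Set M} (hTS : T ⊆ S) {r : ℕ} {a b : M} (h : distIn L T r a b) :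
    distIn L S r a b := by
  induction r generalizing a with
  | zero => exact h
  | succ r ih =>
    rcases h with rfl | ⟨c, ⟨hac, n, R, t, hR, ht, hi, hj⟩, h⟩
    · exact Or.inl rfl
    · exact Or.inr ⟨c, ⟨hac, n, R, t, hR, fun i => hTS (ht i), hi, hj⟩, ih h⟩

theorem distIn_of_ball_subset {S T : Set M} {r : ℕ} {a b : M}
    (hT : ∀ c, distIn L S r a c → c ∈ T) (h : distIn L S r a b) : distIn L T r a b := by
  induction r generalizing a with
  | zero => exact h
  | succ r ih =>
    rcases h with rfl | ⟨_, ⟨hac, n, R, t, hR, ht, ⟨i, rfl⟩, j, rfl⟩, h⟩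
    · exact Or.inl rfl
    · have hball : ∀ l, t l ∈ T := fun l =>
        hT _ (distIn_mono (by omega) (distIn_one_of_relMap hR ht i l))
      refine Or.inr ⟨_, ⟨hac, n, R, t, hR, hball, ⟨i, rfl⟩, j, rfl⟩, ih (fun c hc => ?_) h⟩
      refine hT c ?_
      rw [Nat.add_comm]
      exact distIn_trans (distIn_one_of_relMap hR ht i j) hc

theorem distIn_congr {S T : Set M} (hTS : T ⊆ S) {r : ℕ} {a : M}
    (hT : ∀ c, distIn L S r a c → c ∈ T) (b : M) : distIn L S r a b ↔ distIn L T r a b :=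
  ⟨distIn_of_ball_subset hT, distIn_mono_set hTS⟩

theorem distIn_univ {r : ℕ} {a b : M} : distIn L Set.univ r a b ↔ distLE L M r a b := by
  induction r generalizing a with
  | zero => exact Iff.rfl
  | succ r ih => simp [distIn, distLE, gaifmanAdj, ih]

theorem distLE_induced [L.IsRelational] (S : Set M) {r : ℕ} (a b : S) :
    (letI := inducedStructure L S; distLE L S r a b) ↔ distIn L S r a b := by
  let := inducedStructure L S
  induction r generalizing a with
  | zero => exact Subtype.ext_iff
  | succ r ih =>
    refine or_congr Subtype.ext_iff ⟨?_, ?_⟩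
    · rintro ⟨c, ⟨hac, n, R, t, hR, ⟨i, hi⟩, j, hj⟩, h⟩
      exact ⟨c, ⟨fun h => hac (Subtype.ext h), n, R, fun i => t i, hR, fun i => (t i).2,
        ⟨i, congrArg _ hi⟩, j, congrArg _ hj⟩, (ih c).1 h⟩
    · rintro ⟨c, ⟨hac, n, R, t, hR, ht, ⟨i, hi⟩, j, rfl⟩, h⟩
      refine ⟨⟨t j, ht j⟩, ⟨fun h => hac (congrArg Subtype.val h), n, R, fun i => ⟨t i, ht i⟩, hR,
        ⟨i, Subtype.ext hi⟩, j, rfl⟩, (ih ⟨t j, ht j⟩).2 h⟩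

theorem subset_ballIn {V : Type} (S : Set M) (r : ℕ) (u : V → M) (i : V) : u i ∈ ballIn L S r u :=
  ⟨i, distIn_refl _ _ _⟩

theorem ballIn_subset {V : Type} {S : Set M} (r : ℕ) {u : V → M} (hu : ∀ i, u i ∈ S) :
    ballIn L S r u ⊆ S := fun _ ⟨i, h⟩ => distIn_mem h (hu i)

theorem ballIn_mono {V : Type} {S : Set M} {r s : ℕ} (h : r ≤ s) (u : V → M) :
    ballIn L S r u ⊆ ballIn L S s u := fun _ ⟨i, hi⟩ => ⟨i, distIn_mono h hi⟩

theorem ballIn_elim {V W : Type} (S : Set M) (r : ℕ) (u : V → M) (v : W → M) :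
    ballIn L S r (Sum.elim u v) = ballIn L S r u ∪ ballIn L S r v := by
  ext b
  simp [ballIn]

theorem mem_ballIn_congr {V : Type} {S T : Set M} (hTS : T ⊆ S) {r : ℕ} {u : V → M}
    (hT : ballIn L S r u ⊆ T) : ballIn L S r u = ballIn L T r u := by
  ext b
  exact exists_congr fun i => distIn_congr hTS (fun c hc => hT ⟨i, hc⟩) b

end Distance

section Definability

variable {L : FirstOrder.Language}

/-- A property of families of elements of a substructure, the substructure being given by its
universe `S` inside an ambient structure `M`. -/
abbrev Query (L : FirstOrder.Language) (V : Type) :=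
  ∀ (M : Type w) [L.Structure M], Set M → (V → M) → Prop

/-- The first-order definable queries (over a relational language). -/
inductive Definable : ∀ {V : Type}, Query.{w} L V → Prop
  | eq {V : Type} (i j : V) : Definable fun _ _ _ u => u i = u j
  | rel {V : Type} {n : ℕ} (R : L.Relations n) (g : Fin n → V) :
      Definable fun _ _ _ u => Structure.RelMap R (u ∘ g)
  | falsum {V : Type} : Definable fun _ _ _ (_ : V → _) => False
  | imp {V : Type} {P Q : Query.{w} L V} : Definable P → Definable Q →
      Definable fun M _ S u => P M S u → Q M S u
  | all {V : Type} {Q : Query.{w} L (V ⊕ Fin 1)} : Definable Q →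
      Definable fun M _ S (u : V → M) => ∀ y ∈ S, Q M S (Sum.elim u fun _ => y)
  | congr {V : Type} {P Q : Query.{w} L V} : Definable P →
      (∀ (M : Type w) [L.Structure M] (S : Set M) (u : V → M), (∀ i, u i ∈ S) →
        (P M S u ↔ Q M S u)) → Definable Q

theorem elim_mem {V W M : Type*} {S : Set M} {u : V → M} {v : W → M} (hu : ∀ i, u i ∈ S)
    (hv : ∀ i, v i ∈ S) (i : V ⊕ W) : Sum.elim u v i ∈ S := by
  cases i with
  | inl i => exact hu i
  | inr i => exact hv i

namespace Definable

variable {V W : Type} {P Q : Query.{w} L V}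

theorem not (hP : Definable P) : Definable (L := L) fun M _ S u => ¬ P M S u := hP.imp falsum

theorem and (hP : Definable P) (hQ : Definable Q) :
    Definable (L := L) fun M _ S u => P M S u ∧ Q M S u :=
  (hP.imp hQ.not).not.congr fun M _ S u _ => by tauto

theorem or (hP : Definable P) (hQ : Definable Q) :
    Definable (L := L) fun M _ S u => P M S u ∨ Q M S u :=
  (hP.not.imp hQ).congr fun M _ S u _ => by tauto

theorem ex {Q : Query.{w} L (V ⊕ Fin 1)} (hQ : Definable Q) :
    Definable (L := L) fun M _ S (u : V → M) => ∃ y ∈ S, Q M S (Sum.elim u fun _ => y) :=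
  hQ.not.all.not.congr fun M _ S u _ => by push Not; rfl

theorem comap {Q : Query.{w} L W} (hQ : Definable Q) {V : Type} (f : W → V) :
    Definable (L := L) fun M _ S (u : V → M) => Q M S (u ∘ f) := by
  induction hQ generalizing V with
  | eq i j => exact eq (f i) (f j)
  | rel R g => exact rel R (f ∘ g)
  | falsum => exact falsum
  | imp _ _ ih ih' => exact (ih f).imp (ih' f)
  | @all W Q _ ih =>
    refine (ih (Sum.map f id)).all.congr fun M _ S u _ => ?_
    simp only [Sum.elim_comp_map, Function.comp_id]
  | congr _ h ih => exact (ih f).congr fun M _ S u hu => h M S _ fun i => hu _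

theorem forall_finite {ι : Type*} [Finite ι] {Q : ι → Query.{w} L V} (hQ : ∀ i, Definable (Q i)) :
    Definable (L := L) fun M _ S u => ∀ i, Q i M S u := by
  classical
  cases nonempty_fintype ι
  suffices h : ∀ s : Finset ι, Definable (L := L) fun M _ S u => ∀ i ∈ s, Q i M S u from
    (h Finset.univ).congr fun M _ S u _ => by simp
  intro s
  induction s using Finset.induction_on with
  | empty => exact falsum.not.congr fun M _ S u _ => by simp
  | insert a s _ ih => exact ((hQ a).and ih).congr fun M _ S u _ => by simp

theorem exists_finite {ι : Type*} [Finite ι] {Q : ι → Query.{w} L V} (hQ : ∀ i, Definable (Q i)) :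
    Definable (L := L) fun M _ S u => ∃ i, Q i M S u :=
  (forall_finite fun i => (hQ i).not).not.congr fun M _ S u _ => by push Not; rfl

theorem ex_fin {n : ℕ} {Q : Query.{w} L (V ⊕ Fin n)} (hQ : Definable Q) :
    Definable (L := L) fun M _ S (u : V → M) =>
      ∃ y : Fin n → M, (∀ i, y i ∈ S) ∧ Q M S (Sum.elim u y) := by
  induction n generalizing V with
  | zero =>
    refine (hQ.comap (Sum.elim id finZeroElim)).congr fun M _ S u _ => ?_
    have h (y : Fin 0 → M) : Sum.elim u y = u ∘ Sum.elim id finZeroElim := by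
      ext (i | i)
      · rfl
      · exact i.elim0
    exact ⟨fun hu => ⟨finZeroElim, fun i => i.elim0, by rwa [h]⟩, fun ⟨y, _, hy⟩ => by rwa [← h y]⟩
  | succ n ih =>
    let f : V ⊕ Fin (n + 1) → (V ⊕ Fin 1) ⊕ Fin n :=
      Sum.elim (Sum.inl ∘ Sum.inl) (Fin.cons (Sum.inl (Sum.inr 0)) Sum.inr)
    refine (ih (hQ.comap f)).ex.congr fun M _ S u _ => ?_
    have h (a : M) (y : Fin n → M) :
        Sum.elim (Sum.elim u fun _ => a) y ∘ f = Sum.elim u (Fin.cons a y) := by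
      ext (i | i)
      · rfl
      · refine Fin.cases ?_ (fun i => ?_) i <;> simp [f]
    simp only [h, Fin.exists_fin_succ_pi, Fin.forall_fin_succ, Fin.cons_zero, Fin.cons_succ]
    exact ⟨fun ⟨a, ha, y, hy, hq⟩ => ⟨a, y, ⟨ha, hy⟩, hq⟩,
      fun ⟨a, y, ⟨ha, hy⟩, hq⟩ => ⟨a, ha, y, hy, hq⟩⟩

variable [L.IsRelational]

theorem exists_formula (hQ : Definable Q) : ∃ ψ : L.Formula V,
    ∀ (M : Type w) [L.Structure M] (S : Set M) (u : V → S),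
      (letI := inducedStructure L S; ψ.Realize u) ↔ Q M S fun i => u i := by
  induction hQ with
  | eq i j =>
    exact ⟨Term.equal (Term.var i) (Term.var j), fun M _ S u => by
      simp [Formula.realize_equal, Subtype.ext_iff]⟩
  | rel R g =>
    exact ⟨R.formula fun i => Term.var (g i), fun M _ S u => by
      let := inducedStructure L S
      exact Formula.realize_rel⟩
  | falsum => exact ⟨⊥, fun M _ S u => Iff.rfl⟩
  | imp _ _ ih ih' =>
    obtain ⟨ψ, hψ⟩ := ih
    obtain ⟨χ, hχ⟩ := ih'
    exact ⟨ψ.imp χ, fun M _ S u => imp_congr (hψ M S u) (hχ M S u)⟩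
  | all _ ih =>
    obtain ⟨ψ, hψ⟩ := ih
    refine ⟨ψ.iAlls (Fin 1), fun M _ S u => ?_⟩
    let := inducedStructure L S
    refine BoundedFormula.realize_iAlls.trans ⟨fun h y hy => ?_, fun h v => ?_⟩
    · convert (hψ M S _).1 (h fun _ => ⟨y, hy⟩) using 1
      ext (i | i) <;> rfl
    · refine (hψ M S _).2 ?_
      convert h (v 0) (v 0).2 using 1
      ext (i | i)
      · rfl
      · obtain rfl := Subsingleton.elim i 0; rfl
  | congr _ h ih =>
    obtain ⟨ψ, hψ⟩ := ih
    exact ⟨ψ, fun M _ S u => (hψ M S u).trans (h M S _ fun i => (u i).2)⟩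

end Definable

variable [L.IsRelational]

theorem Term.exists_eq_var {α : Type*} (t : L.Term α) : ∃ i, t = Term.var i := by
  cases t with
  | var i => exact ⟨i, rfl⟩
  | func f _ => exact isEmptyElim f

theorem exists_definable_boundedFormula {α : Type} {n : ℕ} (φ : L.BoundedFormula α n) {V : Type}
    (f : α ⊕ Fin n → V) : ∃ Q : Query.{w} L V, Definable Q ∧
      ∀ (M : Type w) [L.Structure M] (S : Set M) (u : V → S), (Q M S fun i => u i) ↔
        (letI := inducedStructure L S; φ.Realize (u ∘ f ∘ Sum.inl) (u ∘ f ∘ Sum.inr)) := by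
  induction φ generalizing V with
  | falsum => exact ⟨_, .falsum, fun M _ S u => Iff.rfl⟩
  | equal t₁ t₂ =>
    obtain ⟨i, rfl⟩ := Term.exists_eq_var t₁
    obtain ⟨j, rfl⟩ := Term.exists_eq_var t₂
    refine ⟨_, .eq (f i) (f j), fun M _ S u => ?_⟩
    let := inducedStructure L S
    simp only [BoundedFormula.Realize]
    rw [Term.realize_var, Term.realize_var, ← Function.comp_assoc, ← Function.comp_assoc,
      Sum.elim_comp_inl_inr]
    exact Subtype.ext_iff.symm
  | rel R ts =>
    choose g hg using fun i => Term.exists_eq_var (ts i)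
    obtain rfl : ts = fun i => Term.var (g i) := funext hg
    refine ⟨_, .rel R (f ∘ g), fun M _ S u => ?_⟩
    let := inducedStructure L S
    simp only [BoundedFormula.Realize, Term.realize_var]
    rw [← Function.comp_assoc u, ← Function.comp_assoc u, Sum.elim_comp_inl_inr]
    rfl
  | imp _ _ ih ih' =>
    obtain ⟨P, hP, h⟩ := ih f
    obtain ⟨Q, hQ, h'⟩ := ih' f
    exact ⟨_, hP.imp hQ, fun M _ S u => imp_congr (h M S u) (h' M S u)⟩
  | @all n φ ih =>
    let f' : α ⊕ Fin (n + 1) → V ⊕ Fin 1 :=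
      Sum.elim (Sum.inl ∘ f ∘ Sum.inl) (Fin.snoc (Sum.inl ∘ f ∘ Sum.inr) (Sum.inr 0))
    obtain ⟨Q, hQ, h⟩ := ih f'
    refine ⟨_, hQ.all, fun M _ S u => ?_⟩
    let := inducedStructure L S
    have key (y : S) : Q M S (Sum.elim (fun i => (u i : M)) fun _ => (y : M)) ↔
        BoundedFormula.Realize φ (u ∘ f ∘ Sum.inl) (Fin.snoc (u ∘ f ∘ Sum.inr) y) := by
      convert h M S (Sum.elim u fun _ => y) using 1
      · rw [iff_eq_eq]
        congr 1
        ext (i | i) <;> rfl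
      · rw [iff_eq_eq]
        congr 1
        ext i
        refine Fin.lastCases ?_ (fun i => ?_) i <;> simp [f']
    exact ⟨fun hy y => (key y).1 (hy y y.2), fun hy y hyS => (key ⟨y, hyS⟩).2 (hy ⟨y, hyS⟩)⟩

theorem definable_distIn {d : L.Formula (Fin 2)} {r : ℕ} (hd : IsDistFormula.{w} L r d)
    {V : Type} (i j : V) :
    Definable (L := L) fun (M : Type w) _ S (u : V → M) => distIn L S r (u i) (u j) := by
  obtain ⟨Q, hQ, h⟩ := exists_definable_boundedFormula.{w} d (Sum.elim ![i, j] finZeroElim)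
  refine hQ.congr fun M _ S u hu => ?_
  let := inducedStructure L S
  refine (h M S fun i => ⟨u i, hu i⟩).trans ?_
  refine Iff.trans ?_ ((hd S ⟨u i, hu i⟩ ⟨u j, hu j⟩).trans (distLE_induced S _ _))
  rw [iff_eq_eq, Formula.Realize]
  congr 1
  · ext l
    fin_cases l <;> rfl
  · exact Subsingleton.elim _ _

end Definability

section Relativization

variable {L : FirstOrder.Language} [L.IsRelational] {d : ℕ → L.Formula (Fin 2)}

theorem definable_mem_ballIn (hd : ∀ r, IsDistFormula.{w} L r (d r)) (r : ℕ) {V W : Type}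
    [Finite W] (c : W → V) (j : V) :
    Definable (L := L) fun (M : Type w) _ S (u : V → M) => u j ∈ ballIn L S r (u ∘ c) :=
  .exists_finite fun i => definable_distIn (hd r) (c i) j

theorem Definable.exists_ballIn (hd : ∀ r, IsDistFormula.{w} L r (d r)) (r : ℕ) {U W : Type}
    [Finite W] {Q : Query.{w} L U} (hQ : Definable Q) {V : Type} (f : U → V) (c : W → V) :
    ∃ P : Query.{w} L V, Definable P ∧
      ∀ (M : Type w) [L.Structure M] (S : Set M) (u : V → M), (∀ i, u i ∈ S) →
        (∀ i, u (f i) ∈ ballIn L S r (u ∘ c)) →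
        (P M S u ↔ Q M (ballIn L S r (u ∘ c)) (u ∘ f)) := by
  induction hQ generalizing V with
  | eq i j => exact ⟨_, .eq (f i) (f j), fun M _ S u _ _ => Iff.rfl⟩
  | rel R g => exact ⟨_, .rel R (f ∘ g), fun M _ S u _ _ => Iff.rfl⟩
  | falsum => exact ⟨_, .falsum, fun M _ S u _ _ => Iff.rfl⟩
  | imp _ _ ih ih' =>
    obtain ⟨P, hP, h⟩ := ih f c
    obtain ⟨P', hP', h'⟩ := ih' f c
    exact ⟨_, hP.imp hP', fun M _ S u hu hf => imp_congr (h M S u hu hf) (h' M S u hu hf)⟩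
  | @all U Q _ ih =>
    obtain ⟨P, hP, h⟩ := ih (Sum.map f id) (Sum.inl ∘ c)
    refine ⟨_, ((definable_mem_ballIn hd r (Sum.inl ∘ c) (Sum.inr 0)).imp hP).all,
      fun M _ S u hu hf => ?_⟩
    have key (y : M) (hy : y ∈ S) (hy' : y ∈ ballIn L S r (u ∘ c)) :
        P M S (Sum.elim u fun _ => y) ↔
          Q M (ballIn L S r (u ∘ c)) (Sum.elim (u ∘ f) fun _ => y) := by
      refine (h M S _ (elim_mem hu fun _ => hy) ?_).trans ?_
      · rintro (i | i)
        · exact hf i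
        · exact hy'
      · rw [Sum.elim_comp_map, Function.comp_id]
        rfl
    exact ⟨fun h y hy => (key y (ballIn_subset r (fun _ => hu _) hy) hy).1
        (h y (ballIn_subset r (fun _ => hu _) hy) hy),
      fun h y hy hy' => (key y hy hy').2 (h y hy')⟩
  | congr _ h ih =>
    obtain ⟨P, hP, h'⟩ := ih f c
    exact ⟨P, hP, fun M _ S u hu hf => (h' M S u hu hf).trans (h M _ _ hf)⟩

theorem Definable.on_ballIn (hd : ∀ r, IsDistFormula.{w} L r (d r)) (r : ℕ) {V : Type}
    [Finite V] {Q : Query.{w} L V} (hQ : Definable Q) :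
    Definable (L := L) fun (M : Type w) _ S (u : V → M) => Q M (ballIn L S r u) u := by
  obtain ⟨P, hP, h⟩ := hQ.exists_ballIn hd r id id
  exact hP.congr fun M _ S u hu => h M S u hu fun i => subset_ballIn _ _ _ _

end Relativization

section Separation

variable {L : FirstOrder.Language}

theorem elim_mem_union {V W M : Type*} {A B : Set M} {a : V → M} {b : W → M} (ha : ∀ i, a i ∈ A)
    (hb : ∀ i, b i ∈ B) (i : V ⊕ W) : Sum.elim a b i ∈ A ∪ B :=
  elim_mem (S := A ∪ B) (fun i => Or.inl (ha i)) (fun i => Or.inr (hb i)) i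

/-- The sets `A` and `B` are disjoint, and no tuple of `A ∪ B` in a relation meets both. -/
structure Separated (L : FirstOrder.Language) {M : Type w} [L.Structure M] (A B : Set M) : Prop where
  disjoint : ∀ x ∈ A, x ∉ B
  relMap : ∀ {n : ℕ} (R : L.Relations n) (t : Fin n → M), Structure.RelMap R t →
    (∀ i, t i ∈ A ∪ B) → ∀ i j, t i ∈ A → t j ∉ B

/-- A property of a pair of substructures with families of elements of each of them. -/
abbrev PairQuery (L : FirstOrder.Language) (V W : Type) :=
  ∀ (M : Type w) [L.Structure M], Set M → Set M → (V → M) → (W → M) → Prop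

/-- Properties of separated pairs of substructures that are finite unions of rectangles
with definable sides. -/
inductive Rectangular {V W : Type} : PairQuery.{w} L V W → Prop
  | rect {P : Query.{w} L V} {Q : Query.{w} L W} : Definable P → Definable Q →
      Rectangular fun M _ A B a b => P M A a ∧ Q M B b
  | or {P Q : PairQuery.{w} L V W} : Rectangular P → Rectangular Q →
      Rectangular fun M _ A B a b => P M A B a b ∨ Q M A B a b
  | congr {P Q : PairQuery.{w} L V W} : Rectangular P →
      (∀ (M : Type w) [L.Structure M] (A B : Set M) (a : V → M) (b : W → M), Separated L A B →
        (∀ i, a i ∈ A) → (∀ i, b i ∈ B) → (P M A B a b ↔ Q M A B a b)) → Rectangular Q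

namespace Rectangular

variable {V W : Type} {P Q : PairQuery.{w} L V W}

theorem left {P : Query.{w} L V} (hP : Definable P) :
    Rectangular (L := L) fun M _ A _ a (_ : W → M) => P M A a :=
  (rect hP Definable.falsum.not).congr fun M _ A B a b _ _ _ => by tauto

theorem right {Q : Query.{w} L W} (hQ : Definable Q) :
    Rectangular (L := L) fun M _ _ B (_ : V → M) b => Q M B b :=
  (rect Definable.falsum.not hQ).congr fun M _ A B a b _ _ _ => by tauto

theorem falsum : Rectangular (L := L) fun (M : Type w) _ _ _ (_ : V → M) (_ : W → M) => False :=
  left Definable.falsum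

theorem and (hP : Rectangular P) (hQ : Rectangular Q) :
    Rectangular (L := L) fun M _ A B a b => P M A B a b ∧ Q M A B a b := by
  induction hP with
  | @rect p q hp hq =>
    induction hQ with
    | rect hp' hq' =>
      exact (rect (hp.and hp') (hq.and hq')).congr fun M _ A B a b _ _ _ => by tauto
    | or _ _ ih ih' => exact (ih.or ih').congr fun M _ A B a b _ _ _ => by tauto
    | congr _ h ih =>
      exact ih.congr fun M _ A B a b hs ha hb => and_congr_right' (h M A B a b hs ha hb)
  | or _ _ ih ih' => exact (ih.or ih').congr fun M _ A B a b _ _ _ => by tauto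
  | congr _ h ih =>
    exact ih.congr fun M _ A B a b hs ha hb => and_congr_left' (h M A B a b hs ha hb)

theorem not (hP : Rectangular P) : Rectangular (L := L) fun M _ A B a b => ¬ P M A B a b := by
  induction hP with
  | rect hp hq =>
    exact ((left hp.not).or (right hq.not)).congr fun M _ A B a b _ _ _ => by tauto
  | or _ _ ih ih' => exact (ih.and ih').congr fun M _ A B a b _ _ _ => by tauto
  | congr _ h ih => exact ih.congr fun M _ A B a b hs ha hb => not_congr (h M A B a b hs ha hb)

theorem imp (hP : Rectangular P) (hQ : Rectangular Q) :
    Rectangular (L := L) fun M _ A B a b => P M A B a b → Q M A B a b :=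
  (hP.not.or hQ).congr fun M _ A B a b _ _ _ => by tauto

theorem ex_left {P : PairQuery.{w} L (V ⊕ Fin 1) W} (hP : Rectangular P) :
    Rectangular (L := L) fun M _ A B (a : V → M) b =>
      ∃ y ∈ A, P M A B (Sum.elim a fun _ => y) b := by
  induction hP with
  | rect hp hq =>
    exact (rect hp.ex hq).congr fun M _ A B a b _ _ _ => by
      simp only [← and_assoc, exists_and_right]
  | or _ _ ih ih' =>
    exact (ih.or ih').congr fun M _ A B a b _ _ _ => by simp only [← exists_or, ← and_or_left]
  | congr _ h ih =>
    exact ih.congr fun M _ A B a b hs ha hb => exists_congr fun y => and_congr_right fun hy =>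
      h M A B _ b hs (elim_mem ha fun _ => hy) hb

theorem ex_right {P : PairQuery.{w} L V (W ⊕ Fin 1)} (hP : Rectangular P) :
    Rectangular (L := L) fun M _ A B a (b : W → M) =>
      ∃ y ∈ B, P M A B a (Sum.elim b fun _ => y) := by
  induction hP with
  | rect hp hq =>
    exact (rect hp hq.ex).congr fun M _ A B a b _ _ _ => by
      simp only [and_left_comm, exists_and_left]
  | or _ _ ih ih' =>
    exact (ih.or ih').congr fun M _ A B a b _ _ _ => by simp only [← exists_or, ← and_or_left]
  | congr _ h ih =>
    exact ih.congr fun M _ A B a b hs ha hb => exists_congr fun y => and_congr_right fun hy =>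
      h M A B a _ hs ha (elim_mem hb fun _ => hy)

end Rectangular

/-- A definable property of a union of two separated substructures is a finite union of
rectangles. -/
theorem Definable.rectangular {U : Type} {Q : Query.{w} L U} (hQ : Definable Q) {V W : Type}
    (f : U → V ⊕ W) :
    Rectangular (L := L) fun M _ A B (a : V → M) (b : W → M) =>
      Q M (A ∪ B) (Sum.elim a b ∘ f) := by
  induction hQ generalizing V W with
  | eq i j =>
    have h₁ {M : Type w} [L.Structure M] {A B : Set M} (hs : Separated L A B) {x y : M}
        (hx : x ∈ A) (hy : y ∈ B) (h : x = y) : False := hs.disjoint x hx (h ▸ hy)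
    rcases hi : f i with i' | i' <;> rcases hj : f j with j' | j'
    · exact (Rectangular.left (.eq i' j')).congr fun M _ A B a b _ _ _ => by simp [hi, hj]
    · refine Rectangular.falsum.congr fun M _ A B a b hs ha hb => ?_
      simpa [hi, hj] using h₁ hs (ha i') (hb j')
    · refine Rectangular.falsum.congr fun M _ A B a b hs ha hb => ?_
      simpa [hi, hj] using fun h => h₁ hs (ha j') (hb i') (Eq.symm h)
    · exact (Rectangular.right (.eq i' j')).congr fun M _ A B a b _ _ _ => by simp [hi, hj]
  | rel R g =>
    by_cases hl : ∀ i, ∃ j, f (g i) = Sum.inl j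
    · choose g' hg' using hl
      refine (Rectangular.left (.rel R g')).congr fun M _ A B a b _ _ _ => ?_
      rw [iff_eq_eq]
      congr 1
      ext i
      simp [hg']
    by_cases hr : ∀ i, ∃ j, f (g i) = Sum.inr j
    · choose g' hg' using hr
      refine (Rectangular.right (.rel R g')).congr fun M _ A B a b _ _ _ => ?_
      rw [iff_eq_eq]
      congr 1
      ext i
      simp [hg']
    refine Rectangular.falsum.congr fun M _ A B a b hs ha hb => iff_of_false id fun h => ?_
    push Not at hl hr
    obtain ⟨i, hi⟩ := hl
    obtain ⟨j, hj⟩ := hr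
    rcases hi' : f (g i) with i' | i'
    · exact hi _ hi'
    rcases hj' : f (g j) with j' | j'
    · refine hs.relMap R _ h (fun l => elim_mem_union ha hb _) j i ?_ ?_
      · simpa [hj'] using ha j'
      · simpa [hi'] using hb i'
    · exact hj _ hj'
  | falsum => exact Rectangular.falsum
  | imp _ _ ih ih' => exact (ih f).imp (ih' f)
  | @all U Q _ ih =>
    let f₁ : U ⊕ Fin 1 → (V ⊕ Fin 1) ⊕ W :=
      Sum.elim (Sum.map Sum.inl id ∘ f) fun _ => Sum.inl (Sum.inr 0)
    let f₂ : U ⊕ Fin 1 → V ⊕ (W ⊕ Fin 1) :=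
      Sum.elim (Sum.map id Sum.inl ∘ f) fun _ => Sum.inr (Sum.inr 0)
    refine ((ih f₁).not.ex_left.or (ih f₂).not.ex_right).not.congr
      fun M _ A B a b _ _ _ => ?_
    have h₁ (y : M) : Sum.elim (Sum.elim a fun _ => y) b ∘ f₁ =
        Sum.elim (Sum.elim a b ∘ f) fun _ => y := by
      ext (i | i)
      · rcases hi : f i with j | j <;> simp [f₁, hi]
      · rfl
    have h₂ (y : M) : Sum.elim a (Sum.elim b fun _ => y) ∘ f₂ =
        Sum.elim (Sum.elim a b ∘ f) fun _ => y := by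
      ext (i | i)
      · rcases hi : f i with j | j <;> simp [f₂, hi]
      · rfl
    simp only [h₁, h₂]
    push Not
    exact ⟨fun h y hy => hy.elim (h.1 y) (h.2 y), fun h => ⟨fun y hy => h y (Or.inl hy),
      fun y hy => h y (Or.inr hy)⟩⟩
  | congr _ h ih =>
    exact (ih f).congr fun M _ A B a b _ ha hb => h M _ _ fun i => elim_mem_union ha hb _

end Separation

section Locality

variable {L : FirstOrder.Language}

/-- The truth value of the query only depends on the `r`-neighbourhood of its arguments. -/
def IsLocalQuery {V : Type} (r : ℕ) (Q : Query.{w} L V) : Prop :=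
  ∀ (M : Type w) [L.Structure M] (S T : Set M) (u : V → M), T ⊆ S → (∀ i, u i ∈ S) →
    ballIn L S r u ⊆ T → (Q M S u ↔ Q M T u)

theorem IsLocalQuery.mono {V : Type} {r s : ℕ} (hrs : r ≤ s) {Q : Query.{w} L V}
    (hQ : IsLocalQuery r Q) : IsLocalQuery s Q :=
  fun M _ S T u hTS hu hT => hQ M S T u hTS hu ((ballIn_mono hrs u).trans hT)

theorem IsLocalQuery.imp {V : Type} {r s : ℕ} {P Q : Query.{w} L V} (hP : IsLocalQuery r P)
    (hQ : IsLocalQuery s Q) : IsLocalQuery (L := L) (max r s) fun M _ S u => P M S u → Q M S u :=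
  fun M _ S T u hTS hu hT => imp_congr ((hP.mono (le_max_left r s)) M S T u hTS hu hT)
    (hQ.mono (le_max_right r s) M S T u hTS hu hT)

theorem isLocalQuery_ballIn {V : Type} (Q : Query.{w} L V) (r : ℕ) :
    IsLocalQuery (L := L) r fun M _ S u => Q M (ballIn L S r u) u := fun M _ S T u hTS _ hT => by
  simp only [mem_ballIn_congr hTS hT]

/-- The elements `y i` are pairwise at distance greater than `2 * r` and satisfy `β`. -/
def IsScattered (β : Query.{w} L (Fin 1)) (r n : ℕ) {M : Type w} [L.Structure M] (S : Set M)
    (y : Fin n → M) : Prop :=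
  (∀ i, y i ∈ S) ∧ (∀ i j, i < j → ¬ distIn L S (2 * r) (y i) (y j)) ∧ ∀ i, β M S fun _ => y i

/-- Decision trees whose inner nodes are basic local sentences and whose leaves are definable
local queries. -/
inductive LocalTree {V : Type} : Query.{w} L V → Prop
  | leaf {r : ℕ} {Q : Query.{w} L V} : Definable Q → IsLocalQuery r Q → LocalTree Q
  | node (r n : ℕ) {β : Query.{w} L (Fin 1)} {P Q : Query.{w} L V} : Definable β →
      IsLocalQuery r β → LocalTree P → LocalTree Q → LocalTree fun M _ S u =>
        ((∃ y, IsScattered β r n S y) → P M S u) ∧ ((¬ ∃ y, IsScattered β r n S y) → Q M S u)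
  | congr {P Q : Query.{w} L V} : LocalTree P →
      (∀ (M : Type w) [L.Structure M] (S : Set M) (u : V → M), (∀ i, u i ∈ S) →
        (P M S u ↔ Q M S u)) → LocalTree Q

namespace LocalTree

variable {V : Type} {P Q : Query.{w} L V}

theorem falsum : LocalTree (L := L) fun (M : Type w) _ _ (_ : V → M) => False :=
  leaf (r := 0) .falsum fun _ _ _ _ _ _ _ _ => Iff.rfl

theorem imp (hP : LocalTree P) (hQ : LocalTree Q) :
    LocalTree (L := L) fun M _ S u => P M S u → Q M S u := by
  induction hP with
  | leaf hp hr =>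
    induction hQ with
    | leaf hq hs => exact leaf (hp.imp hq) (hr.imp hs)
    | node r n hβ hl _ _ ih ih' =>
      exact (node r n hβ hl ih ih').congr fun M _ S u _ => by tauto
    | congr _ h ih => exact ih.congr fun M _ S u hu => imp_congr_right fun _ => h M S u hu
  | node r n hβ hl _ _ ih ih' =>
    exact (node r n hβ hl ih ih').congr fun M _ S u _ => by tauto
  | congr _ h ih => exact ih.congr fun M _ S u hu => imp_congr_left (h M S u hu)

theorem not (hP : LocalTree P) : LocalTree (L := L) fun M _ S u => ¬ P M S u := hP.imp falsum

theorem and (hP : LocalTree P) (hQ : LocalTree Q) :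
    LocalTree (L := L) fun M _ S u => P M S u ∧ Q M S u :=
  (hP.imp hQ.not).not.congr fun M _ S u _ => by tauto

theorem or (hP : LocalTree P) (hQ : LocalTree Q) :
    LocalTree (L := L) fun M _ S u => P M S u ∨ Q M S u :=
  (hP.not.imp hQ).congr fun M _ S u _ => by tauto

theorem exists_lt {Q : ℕ → Query.{w} L V} (hQ : ∀ n, LocalTree (Q n)) (m : ℕ) :
    LocalTree (L := L) fun M _ S u => ∃ n < m, Q n M S u := by
  induction m with
  | zero => exact falsum.congr fun M _ S u _ => by simp
  | succ m ih =>
    exact (ih.or (hQ m)).congr fun M _ S u _ => by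
      simp only [Nat.lt_succ_iff_lt_or_eq, or_and_right, exists_or, exists_eq_left]

theorem sentence {β : Query.{w} L (Fin 1)} (hβ : Definable β) {r : ℕ} (hr : IsLocalQuery r β)
    (n : ℕ) : LocalTree (L := L) fun M _ S (_ : V → M) => ∃ y, IsScattered β r n S y :=
  (node r n hβ hr falsum.not falsum).congr fun M _ S u _ => by tauto

end LocalTree

/-- If `β` holds somewhere far away from `u`, then this is seen either by a `β`-point at moderate
distance from `u` or by a scattered set of `β`-points which is too large to fit near `u`. -/
theorem exists_far_iff {V : Type} [Fintype V] (β : Query.{w} L (Fin 1)) (R : ℕ) {M : Type w}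
    [L.Structure M] (S : Set M) (u : V → M) :
    (∃ y ∈ S, y ∉ ballIn L S R u ∧ β M S fun _ => y) ↔
      (∃ n < Fintype.card V + 2, (∃ y, IsScattered β R n S y) ∧
        ¬ ∃ y : Fin n → M, IsScattered β R n S y ∧ ∀ i, y i ∈ ballIn L S R u) ∨
      ∃ y ∈ S, (y ∈ ballIn L S (3 * R) u ∧ y ∉ ballIn L S R u) ∧ β M S fun _ => y := by
  constructor
  · rintro ⟨y, hyS, hyu, hy⟩
    by_contra! ⟨h₁, h₂⟩
    have key (n : ℕ) (hn : n < Fintype.card V + 2) :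
        ∃ y : Fin n → M, IsScattered β R n S y ∧ ∀ i, y i ∈ ballIn L S R u := by
      induction n with
      | zero =>
        exact ⟨finZeroElim, ⟨fun i => i.elim0, fun i => i.elim0, fun i => i.elim0⟩,
          fun i => i.elim0⟩
      | succ n ih =>
        obtain ⟨z, ⟨hzS, hzd, hzβ⟩, hzu⟩ := ih (by omega)
        refine h₁ (n + 1) hn ⟨Fin.snoc z y, fun i => ?_, fun i j => ?_, fun i => ?_⟩
        · refine Fin.lastCases ?_ (fun i => ?_) i <;> simp [hyS, hzS]
        · refine Fin.lastCases (fun h => absurd h (Fin.le_last _).not_gt) (fun i => ?_) i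
          refine Fin.lastCases (fun _ => ?_) (fun j h => ?_) j
          · rw [Fin.snoc_castSucc, Fin.snoc_last]
            obtain ⟨l, hl⟩ := hzu i
            exact fun h => h₂ y hyS
              ⟨⟨l, distIn_mono (by omega) (distIn_trans hl h)⟩, hyu⟩ hy
          · simpa using hzd i j (by simpa using h)
        · refine Fin.lastCases ?_ (fun i => ?_) i
          · simpa using hy
          · simpa using hzβ i
    obtain ⟨z, ⟨hzS, hzd, hzβ⟩, hzu⟩ := key (Fintype.card V + 1) (by omega)
    choose g hg using hzu
    obtain ⟨i, j, hij, hgij⟩ := Fintype.exists_ne_map_eq_of_card_lt g (by simp)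
    wlog hlt : i < j generalizing i j
    · exact this j i hij.symm hgij.symm (lt_of_le_of_ne (not_lt.1 hlt) hij.symm)
    refine hzd i j hlt ?_
    rw [two_mul]
    exact distIn_trans (distIn_symm (hg i)) (hgij ▸ hg j)
  · rintro (⟨n, -, ⟨y, hy⟩, h⟩ | ⟨y, hyS, ⟨-, hyu⟩, hy⟩)
    · by_contra! hall
      exact h ⟨y, hy, fun i => by_contra fun hi => hall _ (hy.1 i) hi (hy.2.2 i)⟩
    · exact ⟨y, hyS, hyu, hy⟩

/-- The existential quantification over a neighbourhood of a local query is local. -/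
theorem IsLocalQuery.ex_near {V : Type} {r : ℕ} {Q : Query.{w} L (V ⊕ Fin 1)}
    (hQ : IsLocalQuery r Q) (R : ℕ) :
    IsLocalQuery (L := L) (R + r) fun M _ S (u : V → M) =>
      ∃ y ∈ S, y ∈ ballIn L S R u ∧ Q M S (Sum.elim u fun _ => y) := by
  intro M _ S T u hTS hu hT
  have hR : ballIn L S R u ⊆ T := (ballIn_mono (by omega) u).trans hT
  have h (y : M) (hy : y ∈ ballIn L S R u) :
      Q M S (Sum.elim u fun _ => y) ↔ Q M T (Sum.elim u fun _ => y) := by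
    refine hQ M S T _ hTS (elim_mem hu fun _ => ballIn_subset R hu hy) ?_
    rw [ballIn_elim]
    refine Set.union_subset ((ballIn_mono (by omega) u).trans hT) ?_
    obtain ⟨i, hi⟩ := hy
    rintro z ⟨_, hz⟩
    exact hT ⟨i, distIn_trans hi hz⟩
  constructor
  · rintro ⟨y, -, hyu, hy⟩
    exact ⟨y, hR hyu, mem_ballIn_congr hTS hR ▸ hyu, (h y hyu).1 hy⟩
  · rintro ⟨y, hyT, hyu, hy⟩
    rw [← mem_ballIn_congr hTS hR] at hyu
    exact ⟨y, hTS hyT, hyu, (h y hyu).2 hy⟩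

theorem IsLocalQuery.ex_scattered {V : Type} {R : ℕ} {β : Query.{w} L (Fin 1)}
    (hβ : IsLocalQuery R β) (n : ℕ) :
    IsLocalQuery (L := L) (3 * R) fun M _ S (u : V → M) =>
      ∃ y : Fin n → M, IsScattered β R n S y ∧ ∀ i, y i ∈ ballIn L S R u := by
  intro M _ S T u hTS hu hT
  have hR : ballIn L S R u ⊆ T := (ballIn_mono (by omega) u).trans hT
  beta_reduce
  rw [← mem_ballIn_congr hTS hR]
  refine exists_congr fun y => and_congr_left fun hy => ?_
  have hyS (i : Fin n) : y i ∈ S := ballIn_subset R hu (hy i)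
  have hyT (i : Fin n) (s : ℕ) (hs : s ≤ 2 * R) (b : M) (hb : distIn L S s (y i) b) : b ∈ T := by
    obtain ⟨l, hl⟩ := hy i
    exact hT ⟨l, distIn_mono (by omega) (distIn_trans hl hb)⟩
  refine and_congr (iff_of_true hyS fun i => hR (hy i)) (and_congr ?_ ?_)
  · exact forall_congr' fun i => forall₂_congr fun j _ =>
      not_congr (distIn_congr hTS (hyT i _ le_rfl) _)
  · exact forall_congr' fun i => hβ M S T _ hTS (fun _ => hyS i)
      fun b ⟨_, hb⟩ => hyT i R (by omega) b hb

variable [L.IsRelational] {d : ℕ → L.Formula (Fin 2)}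

theorem LocalTree.ex_far (hd : ∀ r, IsDistFormula.{w} L r (d r)) {V : Type} [Finite V]
    {β : Query.{w} L (Fin 1)} (hβ : Definable β) {R : ℕ} (hR : IsLocalQuery R β) :
    LocalTree (L := L) fun M _ S (u : V → M) =>
      ∃ y ∈ S, y ∉ ballIn L S R u ∧ β M S fun _ => y := by
  cases nonempty_fintype V
  have hout : IsLocalQuery (L := L) R fun (M : Type w) _ S (v : V ⊕ Fin 1 → M) =>
      v (Sum.inr 0) ∉ ballIn L S R (v ∘ Sum.inl) ∧ β M S (v ∘ Sum.inr) := by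
    intro M _ S T v hTS hv hT
    have hinl : ballIn L S R (v ∘ Sum.inl) ⊆ T := fun b ⟨i, hi⟩ => hT ⟨_, hi⟩
    have hinr : ballIn L S R (v ∘ Sum.inr) ⊆ T := fun b ⟨i, hi⟩ => hT ⟨_, hi⟩
    beta_reduce
    rw [mem_ballIn_congr hTS hinl]
    exact and_congr_right' (hR M S T _ hTS (fun _ => hv _) hinr)
  have hnear : LocalTree (L := L) fun (M : Type w) _ S (u : V → M) =>
      ∃ y ∈ S, (y ∈ ballIn L S (3 * R) u ∧ y ∉ ballIn L S R u) ∧ β M S fun _ => y := by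
    refine (leaf (((definable_mem_ballIn hd (3 * R) Sum.inl (Sum.inr 0)).and
      ((definable_mem_ballIn hd R Sum.inl (Sum.inr 0)).not.and (hβ.comap Sum.inr))).ex)
      (hout.ex_near (3 * R))).congr fun M _ S u _ => ?_
    simp only [and_assoc]
    rfl
  have hscat (n : ℕ) : LocalTree (L := L) fun (M : Type w) _ S (u : V → M) =>
      ∃ y : Fin n → M, IsScattered β R n S y ∧ ∀ i, y i ∈ ballIn L S R u := by
    refine leaf ?_ (hR.ex_scattered n)
    have hdist (i j : Fin n) : Definable (L := L) fun (M : Type w) _ S (v : V ⊕ Fin n → M) =>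
        i < j → ¬ distIn L S (2 * R) (v (Sum.inr i)) (v (Sum.inr j)) := by
      by_cases hij : i < j
      · exact (definable_distIn (hd (2 * R)) (Sum.inr i) (Sum.inr j)).not.congr
          fun M _ S v _ => by simp [hij]
      · exact Definable.falsum.not.congr fun M _ S v _ => by simp [hij]
    refine ((((Definable.forall_finite fun i => .forall_finite (hdist i)).and
      (.forall_finite fun i : Fin n => hβ.comap fun _ => Sum.inr i)).and
      (.forall_finite fun i : Fin n => definable_mem_ballIn hd R Sum.inl (Sum.inr i))).ex_fin).congr
      fun M _ S u _ => exists_congr fun y => ?_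
    rw [← and_assoc]
    rfl
  exact ((exists_lt (fun n => (sentence hβ hR n).and (hscat n).not) _).or hnear).congr
    fun M _ S u _ => (exists_far_iff β R S u).symm

theorem LocalTree.ex_leaf (hd : ∀ r, IsDistFormula.{w} L r (d r)) {V : Type} [Finite V]
    {Q : Query.{w} L (V ⊕ Fin 1)} (hQ : Definable Q) {r : ℕ} (hr : IsLocalQuery r Q) :
    LocalTree (L := L) fun M _ S (u : V → M) => ∃ y ∈ S, Q M S (Sum.elim u fun _ => y) := by
  have hnear : LocalTree (L := L) fun (M : Type w) _ S (u : V → M) =>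
      ∃ y ∈ S, y ∈ ballIn L S (2 * r + 1) u ∧ Q M S (Sum.elim u fun _ => y) :=
    leaf ((definable_mem_ballIn hd _ Sum.inl (Sum.inr 0)).and hQ).ex (hr.ex_near _)
  have hfar {P : PairQuery.{w} L V (Fin 1)} (hP : Rectangular P) :
      LocalTree (L := L) fun (M : Type w) _ S (u : V → M) =>
        ∃ y ∈ S, y ∉ ballIn L S (2 * r + 1) u ∧
          P M (ballIn L S r u) (ballIn L S r fun _ : Fin 1 => y) u fun _ => y := by
    induction hP with
    | rect hp hq =>
      refine ((leaf (hp.on_ballIn hd r) (isLocalQuery_ballIn _ r)).and (ex_far hd (R := 2 * r + 1)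
        (hq.on_ballIn hd r) ((isLocalQuery_ballIn _ r).mono (by omega)))).congr fun M _ S u _ => ?_
      simp only [and_left_comm, exists_and_left]
    | or _ _ ih ih' =>
      exact (ih.or ih').congr fun M _ S u _ => by simp only [← exists_or, ← and_or_left]
    | congr _ h ih =>
      refine ih.congr fun M _ S u hu => exists_congr fun y => and_congr_right fun hyS =>
        and_congr_right fun hy => h M _ _ u _ ⟨?_, ?_⟩ (subset_ballIn _ _ _) (subset_ballIn _ _ _)
      · rintro x ⟨i, hi⟩ ⟨_, hx⟩
        exact hy ⟨i, distIn_mono (by omega) (distIn_trans hi (distIn_symm hx))⟩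
      · rintro n R t hR ht i j ⟨l, hl⟩ ⟨_, hj⟩
        refine hy ⟨l, ?_⟩
        have hij := distIn_one_of_relMap (S := S) hR (fun i => (ht i).elim
          (fun h => ballIn_subset r hu h) fun h => ballIn_subset r (fun _ => hyS) h) i j
        exact distIn_mono (by omega) (distIn_trans (distIn_trans hl hij) (distIn_symm hj))
  refine (hnear.or (hfar (hQ.rectangular id))).congr fun M _ S u hu => ?_
  rw [← exists_or]
  refine exists_congr fun y => ?_
  rw [← and_or_left]
  refine and_congr_right fun hy => ?_
  have huy := elim_mem (v := fun _ : Fin 1 => y) hu fun _ => hy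
  rw [Function.comp_id, ← ballIn_elim, ← hr M S _ _ (ballIn_subset r huy) huy subset_rfl,
    ← or_and_right]
  exact and_iff_right (Classical.em _)

theorem LocalTree.ex (hd : ∀ r, IsDistFormula.{w} L r (d r)) {V : Type} [Finite V]
    {Q : Query.{w} L (V ⊕ Fin 1)} (hQ : LocalTree Q) :
    LocalTree (L := L) fun M _ S (u : V → M) => ∃ y ∈ S, Q M S (Sum.elim u fun _ => y) := by
  induction hQ with
  | leaf hq hr => exact ex_leaf hd hq hr
  | @node r n β _ _ hβ hl _ _ ih ih' =>
    refine (node r n hβ hl ih ih').congr fun M _ S u _ => ?_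
    by_cases h : ∃ y, IsScattered β r n S y <;> simp [h]
  | congr _ h ih =>
    exact ih.congr fun M _ S u hu => exists_congr fun y => and_congr_right fun hy =>
      h M S _ (elim_mem hu fun _ => hy)

theorem Definable.localTree (hd : ∀ r, IsDistFormula.{w} L r (d r)) {V : Type}
    {Q : Query.{w} L V} (hQ : Definable Q) : ∀ [Finite V], LocalTree Q := by
  induction hQ with
  | eq i j => intro _; exact .leaf (r := 0) (.eq i j) fun _ _ _ _ _ _ _ _ => Iff.rfl
  | rel R g => intro _; exact .leaf (r := 0) (.rel R g) fun _ _ _ _ _ _ _ _ => Iff.rfl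
  | falsum => intro _; exact .falsum
  | imp _ _ ih ih' => intro _; exact ih.imp ih'
  | all _ ih =>
    intro _
    exact (LocalTree.ex hd ih.not).not.congr fun M _ S u _ => by push Not; rfl
  | congr _ h ih => intro _; exact ih.congr h

end Locality

section NormalForm

variable {L : FirstOrder.Language}

theorem nbhd_eq_ballIn {M : Type w} [L.Structure M] {k : ℕ} (r : ℕ) (u : Fin k → M) :
    nbhd L M r u = ballIn L Set.univ r u := by
  simp only [nbhd, ballIn, distIn_univ]

theorem realize_basicLocalSentence {d : ℕ → L.Formula (Fin 2)}
    (hd : ∀ r, IsDistFormula.{w} L r (d r)) (r n : ℕ) (ψ : L.Formula (Fin 1)) {k : ℕ} {M : Type w}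
    [L.Structure M] (u : Fin k → M) :
    (basicLocalSentence d r n ψ k).Realize u ↔ ∃ y : Fin n → M,
      (∀ i j, i < j → ¬ distLE L M (2 * r) (y i) (y j)) ∧ ∀ i, ψ.Realize fun _ => y i := by
  have hdist (y : Fin n → M) (i j : Fin n) :
      (BoundedFormula.relabel (![Sum.inr i, Sum.inr j] : Fin 2 → Fin k ⊕ Fin n)
        (d (2 * r))).Realize u y ↔ distLE L M (2 * r) (y i) (y j) := by
    rw [BoundedFormula.realize_relabel, ← hd (2 * r) M, Formula.Realize]
    refine iff_of_eq (congr_arg₂ _ ?_ (Subsingleton.elim _ _))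
    ext l
    fin_cases l <;> simp
  have hψ (y : Fin n → M) (i : Fin n) :
      (BoundedFormula.relabel ((fun _ => Sum.inr i) : Fin 1 → Fin k ⊕ Fin n) ψ).Realize u y ↔
        ψ.Realize fun _ => y i := by
    rw [BoundedFormula.realize_relabel, Formula.Realize]
    refine iff_of_eq (congr_arg₂ _ ?_ (Subsingleton.elim _ _))
    ext l
    simp
  simp only [basicLocalSentence, BoundedFormula.realize_exs]
  refine exists_congr fun y => ?_
  rw [BoundedFormula.realize_foldr_inf]
  simp only [List.mem_append, List.mem_map, List.mem_filter, or_imp, forall_and,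
    forall_exists_index, and_imp, forall_apply_eq_imp_iff₂, Prod.forall, List.pair_mem_product]
  refine and_congr ?_ ?_
  · simp only [List.mem_finRange, decide_eq_true_eq, true_imp_iff]
    exact ⟨fun h i j hij => (hdist y i j).not.1 (BoundedFormula.realize_not.1 (h _ i j hij rfl)),
      fun h _ i j hij e => e ▸ BoundedFormula.realize_not.2 ((hdist y i j).not.2 (h i j hij))⟩
  · simp only [hψ, List.mem_finRange, true_imp_iff]

variable [L.IsRelational]

/-- The substructure induced on the whole universe is isomorphic to the structure itself. -/
def inducedUnivEquiv (L : FirstOrder.Language) [L.IsRelational] (M : Type w) [L.Structure M] :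
    letI := inducedStructure L (Set.univ : Set M)
    (Set.univ : Set M) ≃[L] M :=
  letI := inducedStructure L (Set.univ : Set M)
  { Equiv.Set.univ M with
    map_fun' := fun f => isEmptyElim f
    map_rel' := fun _ _ => Iff.rfl }

theorem realize_induced_univ {V : Type} (ψ : L.Formula V) {M : Type w} [L.Structure M]
    (u : V → M) :
    (letI := inducedStructure L (Set.univ : Set M)
     Formula.Realize (M := (Set.univ : Set M)) ψ fun i => ⟨u i, trivial⟩) ↔ ψ.Realize u := by
  let := inducedStructure L (Set.univ : Set M)
  exact (StrongHomClass.realize_formula (inducedUnivEquiv L M) ψ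
    (v := fun i => (⟨u i, trivial⟩ : (Set.univ : Set M)))).symm

/-- The formula `ψ` expresses the query `Q` in every induced substructure. -/
def Expresses {V : Type} (ψ : L.Formula V) (Q : Query.{w} L V) : Prop :=
  ∀ (M : Type w) [L.Structure M] (S : Set M) (u : V → S),
    (letI := inducedStructure L S; ψ.Realize u) ↔ Q M S fun i => u i

theorem Expresses.realize_iff {V : Type} {ψ : L.Formula V} {Q : Query.{w} L V}
    (h : Expresses ψ Q) {M : Type w} [L.Structure M] (u : V → M) :
    ψ.Realize u ↔ Q M Set.univ u :=
  (realize_induced_univ ψ u).symm.trans (h M Set.univ fun i => ⟨u i, trivial⟩)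

theorem Expresses.rLocal {k : ℕ} {ψ : L.Formula (Fin k)} {Q : Query.{w} L (Fin k)}
    (h : Expresses ψ Q) {r : ℕ} (hr : IsLocalQuery r Q) : RLocal.{w} L r ψ := fun M _ u =>
  (h.realize_iff u).trans <| (hr M Set.univ (nbhd L M r u) u (Set.subset_univ _)
    (fun _ => trivial) (nbhd_eq_ballIn r u).ge).trans
    (h M (nbhd L M r u) fun i => ⟨u i, i, distLE_self L M r (u i)⟩).symm

theorem LocalTree.exists_boolComb {d : ℕ → L.Formula (Fin 2)}
    (hd : ∀ r, IsDistFormula.{w} L r (d r)) {k : ℕ} {Q : Query.{w} L (Fin k)}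
    (hQ : LocalTree Q) :
    ∃ φ' : L.Formula (Fin k),
      BoolComb {χ | (∃ (r kk : ℕ) (ψ : L.Formula (Fin 1)),
          RLocal.{w} L r ψ ∧ χ = basicLocalSentence d r kk ψ k) ∨
          (∃ r : ℕ, RLocal.{w} L r χ)} φ' ∧
      ∀ (M : Type w) [L.Structure M] (u : Fin k → M), φ'.Realize u ↔ Q M Set.univ u := by
  induction hQ with
  | leaf hq hr =>
    obtain ⟨ψ, hψ : Expresses ψ _⟩ := hq.exists_formula
    exact ⟨ψ, .base (Or.inr ⟨_, hψ.rLocal hr⟩), fun M _ u => hψ.realize_iff u⟩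
  | @node r n β P Q hβ hr _ _ ih ih' =>
    obtain ⟨p, hp, hp'⟩ := ih
    obtain ⟨q, hq, hq'⟩ := ih'
    obtain ⟨ψ, hψ : Expresses ψ _⟩ := hβ.exists_formula
    have hχ : BoolComb {χ | (∃ (r kk : ℕ) (ψ : L.Formula (Fin 1)),
        RLocal.{w} L r ψ ∧ χ = basicLocalSentence d r kk ψ k) ∨ (∃ r : ℕ, RLocal.{w} L r χ)}
        (basicLocalSentence d r n ψ k) :=
      .base (Or.inl ⟨r, n, ψ, hψ.rLocal hr, rfl⟩)
    refine ⟨_, (((hχ.imp hp).imp (((hχ.imp .falsum).imp hq).imp .falsum)).imp .falsum),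
      fun M _ u => ?_⟩
    have h : (basicLocalSentence d r n ψ k).Realize u ↔
        ∃ y, IsScattered β r n (Set.univ : Set M) y := by
      simp only [realize_basicLocalSentence hd, IsScattered, distIn_univ, hψ.realize_iff,
        Set.mem_univ, implies_true, true_and]
    simp only [Formula.realize_imp, Formula.realize_bot, hp', hq', h]
    tauto
  | congr _ h ih =>
    obtain ⟨p, hp, hp'⟩ := ih
    exact ⟨p, hp, fun M _ u => (hp' M u).trans (h M _ u fun _ => trivial)⟩

end NormalForm

/-- Gaifman's Locality Theorem: every first-order formula `φ(x̄)` is logically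
equivalent to a Boolean combination of basic local sentences and local formulas with free
variables among `x̄`.  Here `d r` is the formula `δ_{≤r}`. -/
theorem statement_6 {L : FirstOrder.Language} [L.IsRelational] [Finite L.Symbols]
    (k : ℕ) (d : ℕ → L.Formula (Fin 2)) (hd : ∀ r, IsDistFormula.{w} L r (d r))
    (φ : L.Formula (Fin k)) :
    ∃ φ' : L.Formula (Fin k),
      BoolComb {χ | (∃ (r kk : ℕ) (ψ : L.Formula (Fin 1)),
          RLocal.{w} L r ψ ∧ χ = basicLocalSentence d r kk ψ k) ∨
          (∃ r : ℕ, RLocal.{w} L r χ)} φ' ∧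
      ∀ (M : Type w) [L.Structure M] (u : Fin k → M), φ.Realize u ↔ φ'.Realize u := by
  obtain ⟨Q, hQ, h⟩ :=
    exists_definable_boundedFormula.{w} φ (Sum.elim id finZeroElim : Fin k ⊕ Fin 0 → Fin k)
  obtain ⟨φ', hφ', h'⟩ := (Definable.localTree hd hQ).exists_boolComb hd
  refine ⟨φ', hφ', fun M _ u => ?_⟩
  rw [h', ← realize_induced_univ φ u]
  refine Iff.trans (iff_of_eq ?_) (h M Set.univ fun i => ⟨u i, trivial⟩).symm
  unfold Formula.Realize
  congr 1
  exact Subsingleton.elim _ _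
end
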